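/- arXiv:1804.09449 — 4 statements merged into one kernel-verified Lean document; each statement's English description precedes it below -/
import Mathlib

section
/- Let G be a finite simple cubic graph containing the graph K as a subgraph, i.e., there exist five pairwise distinct vertices v1, v2, v3, v4, v5 of G such that v1v2, v1v3, v2v4, v2v5, v3v4, v3v5, v4v5 are all edges of G. Then χ'_N(G) = 7: G admits a normal 7-edge-coloring, but admits no normal edge-coloring with at most 6 colors. -/
open SimpleGraph

/-- A proper edge-coloring: distinct edges of `G` sharing an endpoint get different colors. -/
def IsProperEdgeColoring {V C : Type*} (G : SimpleGraph V) (c : Sym2 V → C) : Prop :=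
  ∀ e ∈ G.edgeSet, ∀ f ∈ G.edgeSet, e ≠ f → (∃ v : V, v ∈ e ∧ v ∈ f) → c e ≠ c f

/-- `S_c(v)`: the set of colors appearing on edges incident to `v`. -/
def colorSet {V C : Type*} (G : SimpleGraph V) (c : Sym2 V → C) (v : V) : Set C :=
  c '' G.incidenceSet v

/-- The edge `uv` is poor: exactly 3 colors appear around its endpoints. -/
def IsPoorAt {V C : Type*} (G : SimpleGraph V) (c : Sym2 V → C) (u v : V) : Prop :=
  (colorSet G c u ∪ colorSet G c v).ncard = 3

/-- The edge `uv` is rich: exactly 5 colors appear around its endpoints. -/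
def IsRichAt {V C : Type*} (G : SimpleGraph V) (c : Sym2 V → C) (u v : V) : Prop :=
  (colorSet G c u ∪ colorSet G c v).ncard = 5

/-- A normal edge-coloring: a proper edge-coloring in which every edge is poor or rich. -/
def IsNormalEdgeColoring {V C : Type*} (G : SimpleGraph V) (c : Sym2 V → C) : Prop :=
  IsProperEdgeColoring G c ∧
    ∀ u v : V, G.Adj u v → IsPoorAt G c u v ∨ IsRichAt G c u v

/-- A nowhere-zero flow with values in an additive group `M` (all elements self-inverse in our
applications): nonzero on every edge, and at every vertex the values on incident edges sum to 0. -/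
def IsNowhereZeroFlow {V M : Type*} [AddCommMonoid M] (G : SimpleGraph V)
    (θ : Sym2 V → M) : Prop :=
  (∀ e ∈ G.edgeSet, θ e ≠ 0) ∧ ∀ v : V, ∑ᶠ e ∈ G.incidenceSet v, θ e = 0

/-- `G` is `k`-edge-connected: connected, and still connected after deleting any set of
fewer than `k` edges. -/
def EdgeConnGe {V : Type*} (G : SimpleGraph V) (k : ℕ) : Prop :=
  G.Connected ∧ ∀ s : Set (Sym2 V), s.ncard < k → (G.deleteEdges s).Connected

/-- `G` is cubic: every vertex has degree 3. -/
def IsCubic {V : Type*} (G : SimpleGraph V) : Prop :=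
  ∀ v : V, (G.neighborSet v).ncard = 3

/-- `G` is bridgeless: no edge is a bridge. -/
def Bridgeless {V : Type*} (G : SimpleGraph V) : Prop :=
  ∀ e ∈ G.edgeSet, ¬ G.IsBridge e


set_option linter.unusedSectionVars false
set_option linter.unnecessarySeqFocus false
namespace NC

open Finset

section multi
variable {E V : Type*} [Fintype E] [DecidableEq E] [DecidableEq V]

/-- edges of the cut determined by `T` -/
def dl (s t : E → V) (T : Finset V) : Finset E :=
  Finset.univ.filter (fun e => ¬ (s e ∈ T ↔ t e ∈ T))

/-- boundary -/
def bd {A : Type*} [AddCommMonoid A] (s t : E → V) (f : E → A) (v : V) : A :=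
  ∑ e, ((if s e = v then f e else 0) + (if t e = v then f e else 0))

theorem mem_dl {s t : E → V} {T : Finset V} {e : E} :
    e ∈ dl s t T ↔ ¬ (s e ∈ T ↔ t e ∈ T) := by simp [dl]

theorem sum_bd {A : Type*} [AddCommMonoid A] (hA : ∀ a : A, a + a = 0) (s t : E → V) (f : E → A)
    (T : Finset V) : ∑ v ∈ T, bd s t f v = ∑ e ∈ dl s t T, f e := by
  unfold bd dl
  rw [Finset.sum_comm, Finset.sum_filter]
  refine Finset.sum_congr rfl fun e _ => ?_
  rw [Finset.sum_add_distrib, Finset.sum_ite_eq, Finset.sum_ite_eq]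
  by_cases h1 : s e ∈ T <;> by_cases h2 : t e ∈ T <;> simp [h1, h2, hA]

theorem bd_add {A : Type*} [AddCommMonoid A] (s t : E → V) (f g : E → A) (v : V) :
    bd s t (fun e => f e + g e) v = bd s t f v + bd s t g v := by
  unfold bd
  rw [← Finset.sum_add_distrib]
  refine Finset.sum_congr rfl fun e _ => ?_
  split_ifs <;> simp <;> abel

theorem bd_sum {A ι : Type*} [AddCommMonoid A] (s t : E → V) (I : Finset ι) (f : ι → E → A) (v : V) :
    bd s t (fun e => ∑ i ∈ I, f i e) v = ∑ i ∈ I, bd s t (f i) v := by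
  classical
  induction I using Finset.induction_on with
  | empty => simp [bd]
  | insert a I ha ih => simp only [Finset.sum_insert ha]; rw [bd_add, ih]

theorem bd_eq_zero {A : Type*} [AddCommMonoid A] (s t : E → V) (f : E → A) (v : V)
    (h : ∀ e, f e ≠ 0 → s e ≠ v ∧ t e ≠ v) : bd s t f v = 0 := by
  unfold bd
  refine Finset.sum_eq_zero fun e _ => ?_
  by_cases hf : f e = 0
  · simp [hf]
  · simp [h e hf]

theorem dl_compl [Fintype V] (s t : E → V) (T : Finset V) : dl s t Tᶜ = dl s t T := by
  ext e; simp only [mem_dl, Finset.mem_compl]; tauto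

/-! ### two edge-disjoint paths, in cut form -/

/-- cut size inside `F` -/
def dF (s t : E → V) (F : Finset E) (T : Finset V) : ℕ :=
  (F.filter (fun e => ¬ (s e ∈ T ↔ t e ∈ T))).card

theorem submod (s t : E → V) (F : Finset E) (A B : Finset V) :
    dF s t F (A ∩ B) + dF s t F (A ∪ B) +
      (F.filter (fun e => (s e ∈ A \ B ∧ t e ∈ B \ A) ∨ (t e ∈ A \ B ∧ s e ∈ B \ A))).card
      ≤ dF s t F A + dF s t F B := by
  unfold dF
  simp only [Finset.card_filter]
  rw [← Finset.sum_add_distrib, ← Finset.sum_add_distrib, ← Finset.sum_add_distrib]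
  refine Finset.sum_le_sum fun e _ => ?_
  by_cases h1 : s e ∈ A <;> by_cases h2 : t e ∈ A <;> by_cases h3 : s e ∈ B <;>
    by_cases h4 : t e ∈ B <;> simp [h1, h2, h3, h4]

def cI (s t : E → V) (F : Finset E) (v : V) (A : Finset V) : Finset E :=
  F.filter (fun e => (s e = v ∧ t e ∈ A) ∨ (t e = v ∧ s e ∈ A))
def cO (s t : E → V) (F : Finset E) (v : V) (A : Finset V) : Finset E :=
  F.filter (fun e => (s e = v ∧ t e ∉ A) ∨ (t e = v ∧ s e ∉ A))

theorem insert_cut (s t : E → V) (F : Finset E) (hF : ∀ e ∈ F, s e ≠ t e) (v : V) (A : Finset V)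
    (hv : v ∉ A) :
    dF s t F (insert v A) + (cI s t F v A).card = dF s t F A + (cO s t F v A).card := by
  unfold dF cI cO
  simp only [Finset.card_filter]
  rw [← Finset.sum_add_distrib, ← Finset.sum_add_distrib]
  refine Finset.sum_congr rfl fun e he => ?_
  have := hF e he
  by_cases a1 : s e = v
  · have a2 : t e ≠ v := fun h => this (a1.trans h.symm)
    have a3 : s e ∉ A := a1 ▸ hv
    by_cases h2 : t e ∈ A <;> simp [a1, a2, hv, h2]
  · by_cases a2 : t e = v
    · by_cases h2 : s e ∈ A <;> simp [a1, a2, hv, h2]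
    · simp [a1, a2]

theorem bd_ind (s t : E → V) (F : Finset E) (hF : ∀ e ∈ F, s e ≠ t e) (v : V) (A : Finset V) :
    bd s t (fun e => if e ∈ F then (1 : ZMod 2) else 0) v
      = ((cI s t F v A).card : ZMod 2) + ((cO s t F v A).card : ZMod 2) := by
  unfold bd cI cO
  simp only [Finset.card_filter]
  push_cast
  rw [← Finset.sum_add_distrib, ← Finset.sum_filter_add_sum_filter_not univ (fun e => e ∈ F)]
  have : (∑ e ∈ univ.filter (fun e => ¬ e ∈ F), ((if s e = v then (if e ∈ F then (1 : ZMod 2) else 0) else 0) + (if t e = v then (if e ∈ F then (1 : ZMod 2) else 0) else 0))) = 0 := by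
    refine Finset.sum_eq_zero fun e he => ?_
    simp at he; simp [he]
  rw [this, add_zero]
  have h2 : univ.filter (fun e => e ∈ F) = F := by ext; simp
  rw [h2]
  refine Finset.sum_congr rfl fun e he => ?_
  have := hF e he
  by_cases a1 : s e = v
  · have a2 : t e ≠ v := fun h => this (a1.trans h.symm)
    by_cases h2 : t e ∈ A <;> simp [a1, a2, h2, he]
  · by_cases a2 : t e = v
    · by_cases h2 : s e ∈ A <;> simp [a1, a2, h2, he]
    · simp [a1, a2]

set_option maxHeartbeats 2000000 in
theorem menger_min [Fintype V] (s t : E → V) (F : Finset E) (x y : V) (hxy : x ≠ y)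
    (hF : ∀ T : Finset V, x ∈ T → y ∉ T → 2 ≤ dF s t F T)
    (hmin : ∀ e ∈ F, ∃ T : Finset V, x ∈ T ∧ y ∉ T ∧ dF s t F T = 2 ∧ ¬ (s e ∈ T ↔ t e ∈ T)) :
    ∀ v, bd s t (fun e => if e ∈ F then (1 : ZMod 2) else 0) v = 0 := by
  have hloop : ∀ e ∈ F, s e ≠ t e := by
    intro e he h
    obtain ⟨T, _, _, _, h4⟩ := hmin e he
    rw [h] at h4; simp at h4
  have z2 : ∀ a : ZMod 2, a + a = 0 := by decide
  -- tight sets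
  let P : Finset V → Prop := fun T => x ∈ T ∧ y ∉ T ∧ dF s t F T = 2
  have hPint : ∀ A B, P A → P B → P (A ∩ B) := by
    intro A B hA hB
    have := submod s t F A B
    have h1 := hF (A ∩ B) (by simp [hA.1, hB.1]) (by simp [hA.2.1])
    have h2 := hF (A ∪ B) (by simp [hA.1]) (by simp [hA.2.1, hB.2.1])
    have h3 := hA.2.2
    have h4 := hB.2.2
    exact ⟨by simp [hA.1, hB.1], by simp [hA.2.1], by omega⟩
  have hPun : ∀ A B, P A → P B → P (A ∪ B) := by
    intro A B hA hB
    have := submod s t F A B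
    have h1 := hF (A ∩ B) (by simp [hA.1, hB.1]) (by simp [hA.2.1])
    have h2 := hF (A ∪ B) (by simp [hA.1]) (by simp [hA.2.1, hB.2.1])
    have h3 := hA.2.2
    have h4 := hB.2.2
    exact ⟨by simp [hA.1], by simp [hA.2.1, hB.2.1], by omega⟩
  have hPcr : ∀ A B, P A → P B → ∀ e ∈ F,
      ¬ ((s e ∈ A \ B ∧ t e ∈ B \ A) ∨ (t e ∈ A \ B ∧ s e ∈ B \ A)) := by
    intro A B hA hB e he hc
    have := submod s t F A B
    have h1 := hF (A ∩ B) (by simp [hA.1, hB.1]) (by simp [hA.2.1])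
    have h2 := hF (A ∪ B) (by simp [hA.1]) (by simp [hA.2.1, hB.2.1])
    have h3 := hA.2.2
    have h4 := hB.2.2
    have h5 : 0 < (F.filter (fun e => (s e ∈ A \ B ∧ t e ∈ B \ A) ∨ (t e ∈ A \ B ∧ s e ∈ B \ A))).card :=
      Finset.card_pos.2 ⟨e, Finset.mem_filter.2 ⟨he, hc⟩⟩
    omega
  -- largest tight set avoiding v, smallest one containing v
  have hmaxA : ∀ v, (∃ A, P A ∧ v ∉ A) → ∃ A, P A ∧ v ∉ A ∧ ∀ T, P T → v ∉ T → T ⊆ A := by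
    intro v ⟨A0, hA0, hv0⟩
    obtain ⟨A, hA, hmax⟩ := Set.Finite.exists_maximal (Set.toFinite {A : Finset V | P A ∧ v ∉ A})
      ⟨A0, hA0, hv0⟩
    refine ⟨A, hA.1, hA.2, fun T hT hvT => ?_⟩
    have := hmax (y := A ∪ T) ⟨hPun _ _ hA.1 hT, by simp [hA.2, hvT]⟩ Finset.subset_union_left
    exact Finset.subset_union_right.trans this
  have hminB : ∀ v, (∃ A, P A ∧ v ∈ A) → ∃ A, P A ∧ v ∈ A ∧ ∀ T, P T → v ∈ T → A ⊆ T := by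
    intro v ⟨A0, hA0, hv0⟩
    obtain ⟨A, hA, hmax⟩ := Set.Finite.exists_minimal (Set.toFinite {A : Finset V | P A ∧ v ∈ A})
      ⟨A0, hA0, hv0⟩
    refine ⟨A, hA.1, hA.2, fun T hT hvT => ?_⟩
    have := hmax (y := A ∩ T) ⟨hPint _ _ hA.1 hT, by simp [hA.2, hvT]⟩ Finset.inter_subset_left
    exact (show A ⊆ A ∩ T from this).trans Finset.inter_subset_right
  -- the case `v ≠ y`
  have key : ∀ v, v ≠ y → bd s t (fun e => if e ∈ F then (1 : ZMod 2) else 0) v = 0 := by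
    intro v hvy
    by_cases hB : ∃ A, P A ∧ v ∈ A
    · obtain ⟨B, hB, hvB, hBmin⟩ := hminB v hB
      have cutB := insert_cut s t F hloop v (B.erase v) (by simp)
      rw [Finset.insert_erase hvB] at cutB
      have hB2 := hB.2.2
      by_cases hA : ∃ A, P A ∧ v ∉ A
      · obtain ⟨A, hA, hvA, hAmax⟩ := hmaxA v hA
        have hvx : v ≠ x := fun h => hvA (h ▸ hA.1)
        have cutA := insert_cut s t F hloop v A hvA
        have hA2 := hA.2.2
        have d1 := hF (insert v A) (by simp [hA.1]) (by simp [hA.2.1, hvy.symm])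
        have d2 := hF (B.erase v) (by simp [hB.1, hvx.symm]) (by simp [hB.2.1])
        have hcr := hPcr A B hA hB
        have keyiff : ∀ e ∈ F, (s e = v → (t e ∈ A ↔ t e ∈ B.erase v)) ∧
            (t e = v → (s e ∈ A ↔ s e ∈ B.erase v)) := by
          intro e he
          obtain ⟨T, hT1, hT2, hT3, hT4⟩ := hmin e he
          have hPT : P T := ⟨hT1, hT2, hT3⟩
          have hc := hcr e he
          have hl := hloop e he
          by_cases hvT : v ∈ T
          · have hs := hBmin T hPT hvT
            constructor
            · intro h; subst h
              have : t e ∉ T := by tauto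
              have : t e ∉ B := fun h => this (hs h)
              simp [this]; intro h3
              apply hc; right; simp [*]
            · intro h; subst h
              have : s e ∉ T := by tauto
              have : s e ∉ B := fun h => this (hs h)
              simp [this]; intro h3
              apply hc; left; simp [*]
          · have hs := hAmax T hPT hvT
            constructor
            · intro h; subst h
              have : t e ∈ T := by tauto
              have : t e ∈ A := hs this
              simp [this, hl.symm]; by_contra h3
              apply hc; right; simp [*]
            · intro h; subst h
              have : s e ∈ T := by tauto
              have : s e ∈ A := hs this
              simp [this, hl]; by_contra h3
              apply hc; left; simp [*]
        have e1 : cI s t F v (B.erase v) = cI s t F v A := by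
          unfold cI
          apply Finset.filter_congr
          intro e he
          have := keyiff e he
          clear * - this
          tauto
        have e2 : cO s t F v (B.erase v) = cO s t F v A := by
          unfold cO
          apply Finset.filter_congr
          intro e he
          have := keyiff e he
          clear * - this
          tauto
        rw [e1, e2] at cutB
        have : (cI s t F v A).card = (cO s t F v A).card := by omega
        rw [bd_ind s t F hloop v A, this, z2]
      · have hout : ∀ e ∈ F, (s e = v → t e ∉ B) ∧ (t e = v → s e ∉ B) := by
          intro e he
          obtain ⟨T, hT1, hT2, hT3, hT4⟩ := hmin e he
          have hPT : P T := ⟨hT1, hT2, hT3⟩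
          by_cases hvT : v ∈ T
          · have hs := hBmin T hPT hvT
            constructor
            · intro h; subst h
              intro h; have := hs h; tauto
            · intro h; subst h
              intro h; have := hs h; tauto
          · exact absurd ⟨T, hPT, hvT⟩ hA
        have hI : cI s t F v (B.erase v) = ∅ := by
          unfold cI
          apply Finset.filter_false_of_mem
          intro e he
          have := hout e he
          simp only [Finset.mem_erase]
          tauto
        rw [hI] at cutB
        simp only [Finset.card_empty, add_zero] at cutB
        by_cases hvx : v = x
        · have c0 := insert_cut s t F hloop v ∅ (by simp)
          have hI0 : cI s t F v ∅ = ∅ := by simp [cI]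
          have d0 : dF s t F ∅ = 0 := by simp [dF]
          have hO : cO s t F v (B.erase v) = cO s t F v ∅ := by
            unfold cO
            apply Finset.filter_congr
            intro e he
            have := hout e he
            simp only [Finset.mem_erase, Finset.notMem_empty]
            tauto
          have d2 := hF (insert v ∅) (by simp [hvx]) (by simp [hvy.symm])
          rw [hI0, d0] at c0
          rw [hO] at cutB
          simp only [Finset.card_empty, add_zero, zero_add] at c0
          have h2 : (cO s t F v ∅).card = 2 := by omega
          rw [bd_ind s t F hloop v ∅, hI0, h2]
          rw [Finset.card_empty]; decide
        · have d2 := hF (B.erase v) (by simp [hB.1, Ne.symm hvx]) (by simp [hB.2.1])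
          have h2 : (cO s t F v (B.erase v)).card = 0 := by omega
          rw [bd_ind s t F hloop v (B.erase v), hI, h2]
          rw [Finset.card_empty]; decide
    · by_cases hA : ∃ A, P A ∧ v ∉ A
      · obtain ⟨A, hA, hvA, hAmax⟩ := hmaxA v hA
        have cutA := insert_cut s t F hloop v A hvA
        have hA2 := hA.2.2
        have d1 := hF (insert v A) (by simp [hA.1]) (by simp [hA.2.1, hvy.symm])
        have hO : cO s t F v A = ∅ := by
          unfold cO
          apply Finset.filter_false_of_mem
          intro e he
          obtain ⟨T, hT1, hT2, hT3, hT4⟩ := hmin e he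
          have hPT : P T := ⟨hT1, hT2, hT3⟩
          by_cases hvT : v ∈ T
          · exact absurd ⟨T, hPT, hvT⟩ hB
          · have hs := hAmax T hPT hvT
            rintro (⟨h1, h2⟩ | ⟨h1, h2⟩)
            · subst h1
              have : t e ∈ T := by tauto
              exact h2 (hs this)
            · subst h1
              have : s e ∈ T := by tauto
              exact h2 (hs this)
        rw [hO] at cutA
        simp only [Finset.card_empty] at cutA
        have h2 : (cI s t F v A).card = 0 := by omega
        rw [bd_ind s t F hloop v A, hO, h2]
        rw [Finset.card_empty]; decide
      · apply bd_eq_zero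
        intro e he
        have he : e ∈ F := by by_contra h; simp [h] at he
        obtain ⟨T, hT1, hT2, hT3, hT4⟩ := hmin e he
        have hPT : P T := ⟨hT1, hT2, hT3⟩
        exfalso
        by_cases hvT : v ∈ T
        · exact hB ⟨T, hPT, hvT⟩
        · exact hA ⟨T, hPT, hvT⟩
  intro v
  by_cases hv : v = y
  · subst hv
    have := sum_bd z2 s t (fun e => if e ∈ F then (1 : ZMod 2) else 0) univ
    rw [← Finset.add_sum_erase _ _ (Finset.mem_univ v)] at this
    rw [Finset.sum_eq_zero (s := univ.erase v) (fun u hu => key u (Finset.ne_of_mem_erase hu))] at this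
    rw [add_zero] at this
    rw [this]
    simp [dl]
  · exact key v hv

theorem menger [Fintype V] (s t : E → V) (x y : V) (F : Finset E)
    (hF : ∀ T : Finset V, x ∈ T → y ∉ T → 2 ≤ dF s t F T) :
    ∃ z : E → ZMod 2, (∀ e, z e ≠ 0 → e ∈ F) ∧ (∀ v, bd s t z v = 0) ∧
      ∀ T : Finset V, x ∈ T → y ∉ T → ∃ e, z e ≠ 0 ∧ ¬ (s e ∈ T ↔ t e ∈ T) := by
  by_cases hxy : x = y
  · subst hxy
    exact ⟨0, by simp, by simp [bd], fun T h1 h2 => absurd h1 h2⟩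
  induction F using Finset.strongInduction with
  | H F ih =>
    by_cases hdel : ∃ e ∈ F, ∀ T : Finset V, x ∈ T → y ∉ T → 2 ≤ dF s t (F.erase e) T
    · obtain ⟨e, he, h⟩ := hdel
      obtain ⟨z, h1, h2, h3⟩ := ih (F.erase e) (Finset.erase_ssubset he) h
      exact ⟨z, fun e h => Finset.mem_of_mem_erase (h1 e h), h2, h3⟩
    · push Not at hdel
      refine ⟨fun e => if e ∈ F then 1 else 0, by simp, menger_min s t F x y hxy hF ?_, ?_⟩
      · intro e he
        obtain ⟨T, h1, h2, h3⟩ := hdel e he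
        have h4 := hF T h1 h2
        have h5 : dF s t F T ≤ dF s t (F.erase e) T + (if ¬ (s e ∈ T ↔ t e ∈ T) then 1 else 0) := by
          unfold dF
          rw [Finset.filter_erase]
          by_cases h : ¬ (s e ∈ T ↔ t e ∈ T)
          · rw [Finset.card_erase_of_mem (Finset.mem_filter.2 ⟨he, h⟩), if_pos h]; omega
          · rw [Finset.erase_eq_of_notMem (by simp only [Finset.mem_filter]; tauto)]; omega
        refine ⟨T, h1, h2, ?_, ?_⟩
        · split_ifs at h5 <;> omega
        · by_contra h
          rw [if_neg (not_not.2 h)] at h5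
          omega
      · intro T h1 h2
        have h4 := hF T h1 h2
        unfold dF at h4
        obtain ⟨e, he⟩ := Finset.card_pos.1 (by omega : 0 < (F.filter (fun e => ¬ (s e ∈ T ↔ t e ∈ T))).card)
        rw [Finset.mem_filter] at he
        exact ⟨e, by simp [he.1], he.2⟩

/-- An even, spanning-connected subgraph on the vertex set `W`. -/
def Span (A : Type*) [AddCommMonoid A] (s t : E → V) (W : Finset V) (z : E → ZMod 2) : Prop :=
  (∀ v, bd s t z v = 0) ∧ (∀ e, z e ≠ 0 → s e ∈ W ∧ t e ∈ W) ∧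
  ∀ μ : V → A, ∑ v ∈ W, μ v = 0 →
    ∃ h : E → A, (∀ e, h e ≠ 0 → z e ≠ 0) ∧ ∀ v ∈ W, bd s t h v = μ v

theorem comp_span (A : Type*) [AddCommMonoid A] (hA : ∀ a : A, a + a = 0)
    [Fintype V] (s t : E → V) (x y : V) (X : Finset V) (hx : x ∈ X)
    (z : E → ZMod 2) (hzX : ∀ e, z e ≠ 0 → s e ∈ X ∧ t e ∈ X) (hz : ∀ v, bd s t z v = 0)
    (hc : ∀ T : Finset V, x ∈ T → y ∉ T → ∃ e, z e ≠ 0 ∧ ¬ (s e ∈ T ↔ t e ∈ T)) :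
    ∃ (W : Finset V) (z' : E → ZMod 2), W ⊆ X ∧ x ∈ W ∧ y ∈ W ∧ Span A s t W z' ∧
      (x ≠ y → ∀ u ∈ W, ∃ e, z' e ≠ 0 ∧ (s e = u ∨ t e = u)) := by
  classical
  let W : Finset V := univ.filter fun u => ∀ T : Finset V, x ∈ T →
    (∀ e, z e ≠ 0 → (s e ∈ T ↔ t e ∈ T)) → u ∈ T
  have hWmin : ∀ T : Finset V, x ∈ T → (∀ e, z e ≠ 0 → (s e ∈ T ↔ t e ∈ T)) → W ⊆ T := by
    intro T h1 h2 u hu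
    exact (Finset.mem_filter.1 hu).2 T h1 h2
  have hxW : x ∈ W := by simp [W]; tauto
  have hWcl : ∀ e, z e ≠ 0 → (s e ∈ W ↔ t e ∈ W) := by
    intro e he
    simp only [W, Finset.mem_filter, Finset.mem_univ, true_and]
    constructor
    · intro h T h1 h2; exact (h2 e he).1 (h T h1 h2)
    · intro h T h1 h2; exact (h2 e he).2 (h T h1 h2)
  have hyW : y ∈ W := by
    by_contra h
    obtain ⟨e, h1, h2⟩ := hc W hxW h
    exact h2 (hWcl e h1)
  have hWX : W ⊆ X := hWmin X hx fun e he => by have := hzX e he; tauto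
  let z' : E → ZMod 2 := fun e => if s e ∈ W then z e else 0
  have hz'z : ∀ e, z' e ≠ 0 ↔ z e ≠ 0 ∧ s e ∈ W := by
    intro e; simp only [z']; split_ifs with h <;> simp [h]
  have hW' : ∀ Q : Finset V, x ∈ Q → (∀ e, z' e ≠ 0 → (s e ∈ Q ↔ t e ∈ Q)) → W ⊆ Q := by
    intro Q h1 h2
    have : W ⊆ Q ∩ W := by
      apply hWmin
      · simp [h1, hxW]
      · intro e he
        have h3 := hWcl e he
        have h4 := h2 e
        rw [hz'z] at h4
        simp only [Finset.mem_inter]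
        tauto
    exact this.trans Finset.inter_subset_left
  refine ⟨W, z', hWX, hxW, hyW, ⟨?_, ?_, ?_⟩, ?_⟩
  · intro v
    by_cases hv : v ∈ W
    · rw [← hz v]
      unfold bd
      refine Finset.sum_congr rfl fun e _ => ?_
      by_cases he : z e = 0
      · simp [z', he]
      · have h3 := hWcl e he
        by_cases h4 : s e ∈ W
        · simp [z', h4]
        · have h5 : t e ∉ W := by tauto
          have h6 : s e ≠ v := fun h => h4 (h ▸ hv)
          have h7 : t e ≠ v := fun h => h5 (h ▸ hv)
          simp [h6, h7]
    · apply bd_eq_zero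
      intro e he
      rw [hz'z] at he
      have h3 := hWcl e he.1
      exact ⟨fun h => hv (h ▸ he.2), fun h => hv (h ▸ h3.1 he.2)⟩
  · intro e he
    rw [hz'z] at he
    exact ⟨he.2, (hWcl e he.1).1 he.2⟩
  · intro μ hμ
    have claim : ∀ u ∈ W, ∀ a : A, ∃ h : E → A, (∀ e, h e ≠ 0 → z' e ≠ 0) ∧
        ∀ v, bd s t h v = (if v = x then a else 0) + (if v = u then a else 0) := by
      let Q : Finset V := univ.filter fun u => ∀ a : A, ∃ h : E → A, (∀ e, h e ≠ 0 → z' e ≠ 0) ∧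
        ∀ v, bd s t h v = (if v = x then a else 0) + (if v = u then a else 0)
      have hstep : ∀ e, z' e ≠ 0 → ∀ a : A, ∀ h : E → A, (∀ e, h e ≠ 0 → z' e ≠ 0) →
          ∃ h' : E → A, (∀ e, h' e ≠ 0 → z' e ≠ 0) ∧ ∀ v, bd s t h' v = bd s t h v +
            ((if v = s e then a else 0) + (if v = t e then a else 0)) := by
        intro e he a h hh
        refine ⟨fun e' => h e' + (if e' = e then a else 0), ?_, ?_⟩
        · intro e' h1
          by_cases h2 : e' = e
          · rw [h2]; exact he
          · simp [h2] at h1; exact hh _ h1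
        · intro v
          rw [bd_add]
          congr 1
          unfold bd
          rw [Finset.sum_eq_single e]
          · simp [eq_comm]
          · intro b _ hb; simp [hb]
          · simp
      have hQ : W ⊆ Q := by
        apply hW'
        · simp only [Q, Finset.mem_filter, Finset.mem_univ, true_and]
          intro a
          refine ⟨0, by simp, fun v => ?_⟩
          split_ifs <;> simp [bd, hA]
        · intro e he
          simp only [Q, Finset.mem_filter, Finset.mem_univ, true_and]
          constructor
          · intro H a
            obtain ⟨h, h1, h2⟩ := H a
            obtain ⟨h', h3, h4⟩ := hstep e he a h h1
            refine ⟨h', h3, fun v => ?_⟩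
            rw [h4, h2, add_assoc, ← add_assoc (if v = s e then a else 0)]
            split_ifs <;> simp [hA]
          · intro H a
            obtain ⟨h, h1, h2⟩ := H a
            obtain ⟨h', h3, h4⟩ := hstep e he a h h1
            refine ⟨h', h3, fun v => ?_⟩
            rw [h4, h2, add_assoc, add_comm (if v = s e then a else 0), ← add_assoc (if v = t e then a else 0)]
            split_ifs <;> simp [hA]
      intro u hu
      exact (Finset.mem_filter.1 (hQ hu)).2
    choose! H hH1 hH2 using claim
    refine ⟨fun e => ∑ u ∈ W, H u (μ u) e, ?_, ?_⟩
    · intro e he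
      obtain ⟨u, hu, h⟩ := Finset.exists_ne_zero_of_sum_ne_zero he
      exact hH1 u hu _ e h
    · intro v hv
      rw [bd_sum, Finset.sum_congr rfl (fun u hu => hH2 u hu (μ u) v), Finset.sum_add_distrib,
        Finset.sum_ite_eq]
      rw [if_pos hv]
      split_ifs
      · rw [hμ, zero_add]
      · simp
  · intro hxy u hu
    by_contra hcon
    push Not at hcon
    have hcl : ∀ e, z' e ≠ 0 → s e ≠ u ∧ t e ≠ u := hcon
    by_cases hux : u = x
    · have := hW' {x} (by simp) (fun e he => by
        have := hcl e he; rw [hux] at this; simp [this])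
      have := this hyW
      simp at this; exact hxy this.symm
    · have := hW' (univ.erase u) (by simp [Ne.symm hux]) (fun e he => by
        have := hcl e he; simp [this])
      have := this hu
      simp at this

end multi
end NC

namespace NC
open Finset
abbrev A2 := ZMod 2 × ZMod 2

theorem A2_two : ∀ a : A2, a + a = 0 := by decide
theorem Z2_two : ∀ a : ZMod 2, a + a = 0 := by decide

section flow
variable {E V : Type*} [Fintype E] [DecidableEq E] [DecidableEq V]

def betw (s t : E → V) (A B : Finset V) : Finset E :=
  univ.filter (fun e => (s e ∈ A ∧ t e ∈ B) ∨ (t e ∈ A ∧ s e ∈ B))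

theorem mem_betw {s t : E → V} {A B : Finset V} {e : E} :
    e ∈ betw s t A B ↔ (s e ∈ A ∧ t e ∈ B) ∨ (t e ∈ A ∧ s e ∈ B) := by simp [betw]

theorem exists_nz (B : Finset E) (hB : 2 ≤ B.card) (m : A2) :
    ∃ k : E → A2, (∀ e ∈ B, k e ≠ 0) ∧ ∑ e ∈ B, k e = m := by
  obtain ⟨e1, h1, e2, h2, hne⟩ := Finset.one_lt_card.1 (by omega : 1 < B.card)
  have key : ∀ m : A2, ∃ a b : A2, a ≠ 0 ∧ b ≠ 0 ∧ a + b = m := by decide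
  obtain ⟨a, b, ha, hb, hab⟩ := key (m + ∑ e ∈ (B.erase e1).erase e2, (1, 0))
  refine ⟨fun e => if e = e1 then a else if e = e2 then b else (1, 0), ?_, ?_⟩
  · intro e _
    dsimp only
    split_ifs
    · exact ha
    · exact hb
    · decide
  · rw [← Finset.add_sum_erase _ _ h1, ← Finset.add_sum_erase _ _ (Finset.mem_erase.2 ⟨hne.symm, h2⟩)]
    have : ∑ e ∈ (B.erase e1).erase e2, (if e = e1 then a else if e = e2 then b else ((1, 0) : A2))
        = ∑ e ∈ (B.erase e1).erase e2, ((1, 0) : A2) := by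
      refine Finset.sum_congr rfl fun e he => ?_
      simp only [Finset.mem_erase] at he
      simp [he.1, he.2.1]
    rw [this]
    simp only [if_true, hne.symm, if_false]
    rw [← add_assoc, hab, add_assoc, A2_two, add_zero]

def Good (s t : E → V) (w : V) (U : Finset V) : Prop :=
  w ∈ U ∧ ∃ f : E → ZMod 2, (∀ v, bd s t f v = 0) ∧ (∀ e, f e ≠ 0 → s e ∈ U ∧ t e ∈ U) ∧
    (∀ e, (s e = w ∨ t e = w) → f e = 0) ∧
    ∀ μ : V → A2, ∑ v ∈ U, μ v = 0 → ∃ g : E → A2, (∀ e, g e ≠ 0 → s e ∈ U ∧ t e ∈ U) ∧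
      (∀ v ∈ U, bd s t g v = μ v) ∧ ∀ e, s e ∈ U → t e ∈ U → f e ≠ 0 ∨ g e ≠ 0

theorem good_base (s t : E → V) (w : V) : Good s t w {w} := by
  refine ⟨by simp, 0, by simp [bd], by simp, by simp, ?_⟩
  intro μ hμ
  simp only [Finset.sum_singleton] at hμ
  refine ⟨fun e => if s e = w ∧ t e = w then (1, 0) else 0, ?_, ?_, ?_⟩
  · intro e he
    by_contra h
    simp only [Finset.mem_singleton] at h
    simp [h] at he
  · intro v hv
    simp only [Finset.mem_singleton] at hv
    subst hv
    rw [hμ]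
    unfold bd
    refine Finset.sum_eq_zero fun e _ => ?_
    by_cases h1 : s e = v <;> by_cases h2 : t e = v <;> simp [h1, h2]
    decide
  · intro e h1 h2
    simp only [Finset.mem_singleton] at h1 h2
    right; simp [h1, h2]

theorem good_step (s t : E → V) (w : V) (U W : Finset V) (hU : Good s t w U) (hd : Disjoint U W)
    (z : E → ZMod 2) (hz : Span A2 s t W z) (hb : 2 ≤ (betw s t U W).card) :
    Good s t w (U ∪ W) := by
  obtain ⟨hw, f, hf1, hf2, hf3, hf4⟩ := hU
  obtain ⟨hz1, hz2, hz3⟩ := hz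
  have dis : ∀ v, v ∈ U → v ∈ W → False := fun v h1 h2 => Finset.disjoint_left.1 hd h1 h2
  refine ⟨Finset.mem_union_left _ hw, fun e => f e + z e, ?_, ?_, ?_, ?_⟩
  · intro v; rw [bd_add, hf1, hz1, add_zero]
  · intro e he
    by_cases h : f e = 0
    · have : z e ≠ 0 := fun h2 => he (by beta_reduce; rw [h, h2, add_zero])
      have := hz2 e this
      simp [this]
    · have := hf2 e h
      simp [this]
  · intro e he
    have : z e = 0 := by
      by_contra h
      have := hz2 e h
      rcases he with h | h
      · exact dis w hw (h ▸ this.1)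
      · exact dis w hw (h ▸ this.2)
    beta_reduce; rw [hf3 e he, this, add_zero]
  · intro μ hμ
    rw [Finset.sum_union hd] at hμ
    obtain ⟨k, hk1, hk2⟩ := exists_nz (betw s t U W) hb (∑ v ∈ W, μ v)
    let g0 : E → A2 := fun e => if e ∈ betw s t U W then k e else
      if s e ∈ W ∧ t e ∈ W ∧ z e = 0 then (1, 0) else 0
    have sumW : ∑ e ∈ dl s t W, g0 e = ∑ v ∈ W, μ v := by
      rw [← hk2]
      have hsub : betw s t U W ⊆ dl s t W := by
        intro e he
        rw [mem_betw] at he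
        rw [mem_dl]
        have := dis (s e); have := dis (t e); tauto
      rw [← Finset.sum_subset hsub]
      · refine Finset.sum_congr rfl fun e he => ?_
        simp [g0, he]
      · intro e h1 h2
        rw [mem_dl] at h1
        have : ¬ (s e ∈ W ∧ t e ∈ W ∧ z e = 0) := by tauto
        simp only [g0]
        rw [if_neg h2, if_neg this]
    have sumU : ∑ e ∈ dl s t U, g0 e = ∑ v ∈ W, μ v := by
      rw [← hk2]
      have hsub : betw s t U W ⊆ dl s t U := by
        intro e he
        rw [mem_betw] at he
        rw [mem_dl]
        have := dis (s e); have := dis (t e); tauto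
      rw [← Finset.sum_subset hsub]
      · refine Finset.sum_congr rfl fun e he => ?_
        simp [g0, he]
      · intro e h1 h2
        rw [mem_dl] at h1
        have : ¬ (s e ∈ W ∧ t e ∈ W ∧ z e = 0) := by
          have := dis (s e); have := dis (t e); tauto
        simp only [g0]
        rw [if_neg h2, if_neg this]
    obtain ⟨h, hh1, hh2⟩ := hz3 (fun v => μ v + bd s t g0 v) (by
      rw [Finset.sum_add_distrib, sum_bd A2_two, sumW, A2_two])
    obtain ⟨g1, hg1, hg2, hg3⟩ := hf4 (fun v => μ v + bd s t g0 v) (by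
      rw [Finset.sum_add_distrib, sum_bd A2_two, sumU, hμ])
    have hhW : ∀ e, h e ≠ 0 → s e ∈ W ∧ t e ∈ W := fun e he => hz2 e (hh1 e he)
    refine ⟨fun e => g0 e + (h e + g1 e), ?_, ?_, ?_⟩
    · intro e he
      by_contra hcon
      apply he
      simp only [Finset.mem_union] at hcon
      have e1 : h e = 0 := by
        by_contra h'; have := hhW e h'; tauto
      have e2 : g1 e = 0 := by
        by_contra h'; have := hg1 e h'; tauto
      have e3 : g0 e = 0 := by
        simp only [g0]
        rw [if_neg (by rw [mem_betw]; tauto), if_neg (by tauto)]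
      beta_reduce; rw [e1, e2, e3]; simp
    · intro v hv
      rw [bd_add, bd_add]
      rcases Finset.mem_union.1 hv with hv | hv
      · have : bd s t h v = 0 := by
          apply bd_eq_zero
          intro e he
          have := hhW e he
          exact ⟨fun h' => dis v hv (h' ▸ this.1), fun h' => dis v hv (h' ▸ this.2)⟩
        rw [this, zero_add, hg2 v hv, add_comm, add_assoc, A2_two, add_zero]
      · have : bd s t g1 v = 0 := by
          apply bd_eq_zero
          intro e he
          have := hg1 e he
          exact ⟨fun h' => dis v (h' ▸ this.1) hv, fun h' => dis v (h' ▸ this.2) hv⟩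
        rw [this, add_zero, hh2 v hv, add_comm, add_assoc, A2_two, add_zero]
    · intro e he1 he2
      by_cases c1 : s e ∈ U ∧ t e ∈ U
      · have e1 : h e = 0 := by
          by_contra h'; have := hhW e h'; exact dis _ c1.1 this.1
        have e3 : g0 e = 0 := by
          have := dis (s e) c1.1; have := dis (t e) c1.2
          simp only [g0]
          rw [if_neg (by rw [mem_betw]; tauto), if_neg (by tauto)]
        have e4 : z e = 0 := by
          by_contra h'; have := hz2 e h'; exact dis _ c1.1 this.1
        beta_reduce; rw [e1, e3, e4]; simpa using hg3 e c1.1 c1.2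
      · have e2 : g1 e = 0 := by
          by_contra h'; exact c1 (hg1 e h')
        have e5 : f e = 0 := by
          by_contra h'; exact c1 (hf2 e h')
        by_cases c2 : s e ∈ W ∧ t e ∈ W
        · by_cases c3 : z e = 0
          · right
            have e1 : h e = 0 := by
              by_contra h'; exact hh1 e h' c3
            have e3 : g0 e = (1, 0) := by
              have := fun h => dis (s e) h c2.1; have := fun h => dis (t e) h c2.2
              simp only [g0]
              rw [if_neg (by rw [mem_betw]; tauto), if_pos (by tauto)]
            beta_reduce; rw [e1, e2, e3]; decide
          · left; beta_reduce; rw [e5]; simpa using c3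
        · right
          have e1 : h e = 0 := by
            by_contra h'; exact c2 (hhW e h')
          have hm : e ∈ betw s t U W := by
            rw [mem_betw]
            simp only [Finset.mem_union] at he1 he2
            tauto
          have e3 : g0 e = k e := by
            simp only [g0]; rw [if_pos hm]
          beta_reduce; rw [e1, e2, e3]; simpa using hk1 e hm

set_option maxHeartbeats 2000000 in
theorem good_extend [Fintype V] (s t : E → V) (w : V)
    (h3 : ∀ T : Finset V, T.Nonempty → T ≠ univ → 3 ≤ (dl s t T).card)
    (U : Finset V) (hU : Good s t w U) (hne : U ≠ univ) :
    ∃ U', U ⊂ U' ∧ Good s t w U' := by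
  obtain ⟨X, ⟨hXne, hXU, hX1⟩, hXmin⟩ := Set.Finite.exists_minimal
    (Set.toFinite {X : Finset V | X.Nonempty ∧ X ⊆ Uᶜ ∧ (betw s t X (Uᶜ \ X)).card ≤ 1})
    ⟨Uᶜ, by
      rw [Finset.nonempty_iff_ne_empty]; intro h; exact hne (by simpa using h), subset_rfl, by simp [betw]⟩
  have hXmin' : ∀ T : Finset V, T.Nonempty → T ⊂ X → 2 ≤ (betw s t T (Uᶜ \ T)).card := by
    intro T h1 h2
    by_contra h
    have := hXmin (y := T) ⟨h1, h2.1.trans hXU, by omega⟩ h2.1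
    exact h2.2 this
  have hwX : w ∉ X := fun h => by have := hXU h; simp [hU.1] at this
  have hdl := h3 X hXne (fun h => hwX (h ▸ Finset.mem_univ _))
  have disU : ∀ v, v ∈ X → v ∉ U := fun v h => by have := hXU h; simpa using this
  have hUX : 2 ≤ (betw s t U X).card := by
    have : dl s t X ⊆ betw s t U X ∪ betw s t X (Uᶜ \ X) := by
      intro e he
      rw [mem_dl] at he
      simp only [Finset.mem_union, mem_betw, Finset.mem_sdiff, Finset.mem_compl]
      tauto
    have := (Finset.card_le_card this).trans (Finset.card_union_le _ _)
    omega
  obtain ⟨e1, h1, e2, h2, he12⟩ := Finset.one_lt_card.1 (by omega : 1 < (betw s t U X).card)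
  have hend : ∀ e ∈ betw s t U X, ∃ x ∈ X, ∀ W : Finset V, x ∈ W → e ∈ betw s t U W := by
    intro e he
    rw [mem_betw] at he
    rcases he with he | he
    · exact ⟨t e, he.2, fun W h => by rw [mem_betw]; tauto⟩
    · exact ⟨s e, he.2, fun W h => by rw [mem_betw]; tauto⟩
  obtain ⟨x, hx, hxW⟩ := hend e1 h1
  obtain ⟨y, hy, hyW⟩ := hend e2 h2
  let F : Finset E := univ.filter fun e => s e ∈ X ∧ t e ∈ X
  obtain ⟨z, hz1, hz2, hz3⟩ := menger s t x y F (by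
    intro T0 hxT hyT
    by_contra hcon
    set T := T0 ∩ X with hT
    have hTX : T ⊆ X := Finset.inter_subset_right
    have hdF : (betw s t T (X \ T)).card ≤ 1 := by
      have : betw s t T (X \ T) ⊆ F.filter (fun e => ¬ (s e ∈ T0 ↔ t e ∈ T0)) := by
        intro e he
        simp only [mem_betw, hT, Finset.mem_inter, Finset.mem_sdiff] at he
        simp only [F, Finset.mem_filter, Finset.mem_univ, true_and]
        tauto
      have := Finset.card_le_card this
      unfold dF at hcon
      omega
    have hxT' : x ∈ T := by simp [hT, hxT, hx]
    have hyT' : y ∉ T := by simp [hT, hyT]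
    have a1 := hXmin' T ⟨x, hxT'⟩ ⟨hTX, fun h => hyT' (h hy)⟩
    have a2 := hXmin' (X \ T) ⟨y, by simp [hy, hyT']⟩
      ⟨Finset.sdiff_subset, fun h => by have := h hx; simp [hxT'] at this⟩
    have b1 : betw s t T (Uᶜ \ T) ⊆ betw s t T (X \ T) ∪ betw s t T (Uᶜ \ X) := by
      intro e he
      simp only [Finset.mem_union, mem_betw, Finset.mem_sdiff, Finset.mem_compl] at he ⊢
      grind
    have b2 : betw s t (X \ T) (Uᶜ \ (X \ T)) ⊆ betw s t T (X \ T) ∪ betw s t (X \ T) (Uᶜ \ X) := by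
      intro e he
      simp only [Finset.mem_union, mem_betw, Finset.mem_sdiff, Finset.mem_compl] at he ⊢
      grind
    have b3 : betw s t T (Uᶜ \ X) ∪ betw s t (X \ T) (Uᶜ \ X) ⊆ betw s t X (Uᶜ \ X) := by
      intro e he
      have k1 := @hTX (s e)
      have k2 := @hTX (t e)
      simp only [Finset.mem_union, mem_betw, Finset.mem_sdiff, Finset.mem_compl] at he ⊢
      grind
    have b4 : Disjoint (betw s t T (Uᶜ \ X)) (betw s t (X \ T) (Uᶜ \ X)) := by
      rw [Finset.disjoint_left]
      intro e h1 h2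
      have k1 := @hTX (s e)
      have k2 := @hTX (t e)
      simp only [mem_betw, Finset.mem_sdiff, Finset.mem_compl] at h1 h2
      tauto
    have c1 := (Finset.card_le_card b1).trans (Finset.card_union_le _ _)
    have c2 := (Finset.card_le_card b2).trans (Finset.card_union_le _ _)
    have c3 := Finset.card_le_card b3
    rw [Finset.card_union_of_disjoint b4] at c3
    omega)
  obtain ⟨W, z', hWX, hxW', hyW', hsp, _⟩ := comp_span A2 A2_two s t x y X hx z
    (fun e he => by have := hz1 e he; simpa [F] using this) hz2 hz3
  refine ⟨U ∪ W, ?_, ?_⟩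
  · refine ⟨Finset.subset_union_left, fun h => ?_⟩
    exact disU x hx (h (Finset.mem_union_right _ hxW'))
  · apply good_step s t w U W hU _ z' hsp
    · have : {e1, e2} ⊆ betw s t U W := by
        intro e he
        simp only [Finset.mem_insert, Finset.mem_singleton] at he
        rcases he with rfl | rfl
        · exact hxW _ hxW'
        · exact hyW _ hyW'
      have := Finset.card_le_card this
      rwa [Finset.card_pair he12] at this
    · rw [Finset.disjoint_left]
      intro v h1 h2
      exact disU v (hWX h2) h1

theorem flow_base [Fintype V] (s t : E → V) (w : V)
    (h3 : ∀ T : Finset V, T.Nonempty → T ≠ univ → 3 ≤ (dl s t T).card) :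
    ∃ (f : E → ZMod 2) (g : E → A2), (∀ v, bd s t f v = 0) ∧ (∀ v, bd s t g v = 0) ∧
      (∀ e, f e ≠ 0 ∨ g e ≠ 0) ∧ ∀ e, (s e = w ∨ t e = w) → f e = 0 := by
  obtain ⟨U, hU, hmax⟩ := Set.Finite.exists_maximal (Set.toFinite {U : Finset V | Good s t w U})
    ⟨{w}, good_base s t w⟩
  have hUu : U = univ := by
    by_contra h
    obtain ⟨U', h1, h2⟩ := good_extend s t w h3 U hU h
    exact h1.2 (hmax (y := U') h2 h1.1)
  obtain ⟨_, f, hf1, hf2, hf3, hf4⟩ := hU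
  obtain ⟨g, hg1, hg2, hg3⟩ := hf4 (fun _ => 0) (by simp)
  subst hUu
  exact ⟨f, g, hf1, fun v => hg2 v (by simp), fun e => hg3 e (by simp) (by simp), hf3⟩

end flow

section glue
variable {E V : Type*} [Fintype E] [DecidableEq E] [DecidableEq V]

def merge (z z' : V) (h : z' ≠ z) (v : V) : {u : V // u ≠ z} := if hv : v = z then ⟨z', h⟩ else ⟨v, hv⟩

theorem merge_bd {A : Type*} [AddCommMonoid A] (s t : E → V) (z z' : V) (h : z' ≠ z) (f : E → A)
    (hf : ∀ u, bd (merge z z' h ∘ s) (merge z z' h ∘ t) f u = 0) :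
    (∀ v, v ≠ z → v ≠ z' → bd s t f v = 0) ∧ bd s t f z + bd s t f z' = 0 := by
  have hm : ∀ (a : V) (u : {u : V // u ≠ z}), merge z z' h a = u ↔ a = u.1 ∨ (a = z ∧ u.1 = z') := by
    intro a u
    unfold merge
    split_ifs with ha
    · subst ha
      have := u.2
      rw [Subtype.ext_iff]
      simp only [true_and]
      constructor
      · intro h; right; exact h.symm
      · rintro (h | h)
        · exact absurd h.symm this
        · exact h.symm
    · rw [Subtype.ext_iff]; simp [ha]
  constructor
  · intro v h1 h2
    rw [← hf ⟨v, h1⟩]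
    unfold bd
    refine Finset.sum_congr rfl fun e _ => ?_
    simp only [Function.comp, hm, h2, and_false, or_false]
  · rw [← hf ⟨z', h⟩]
    unfold bd
    rw [← Finset.sum_add_distrib]
    refine Finset.sum_congr rfl fun e _ => ?_
    simp only [Function.comp, hm, and_true]
    have hz := h
    by_cases a1 : s e = z
    · have a1' : s e ≠ z' := fun h' => h (h'.symm.trans a1)
      by_cases a2 : t e = z
      · have a2' : t e ≠ z' := fun h' => h (h'.symm.trans a2)
        simp [a1, a2, h.symm]
      · by_cases a3 : t e = z'
        · simp [a1, a3, h, h.symm]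
        · simp [a1, a2, a3, h.symm]
    · by_cases a2 : t e = z
      · have a2' : t e ≠ z' := fun h' => h (h'.symm.trans a2)
        by_cases a3 : s e = z'
        · simp [a2, a3, h, h.symm, add_comm]
        · simp [a1, a2, a3, h.symm]
      · simp [a1, a2]

theorem two_zero {A : Type*} [AddCommMonoid A] (hA : ∀ a : A, a + a = 0) [Fintype V] (s t : E → V)
    (z z' : V) (f : E → A)
    (h1 : ∀ v, v ≠ z → v ≠ z' → bd s t f v = 0) (h2 : bd s t f z + bd s t f z' = 0)
    (T : Finset V) (hz : z ∈ T) (hz' : z' ∉ T) (hT : ∑ e ∈ dl s t T, f e = 0) :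
    ∀ v, bd s t f v = 0 := by
  have hzz : bd s t f z = 0 := by
    rw [← sum_bd hA, Finset.sum_eq_single z] at hT
    · exact hT
    · intro b hb hbz; exact h1 b hbz (fun h => hz' (h ▸ hb))
    · intro h; exact absurd hz h
  rw [hzz, zero_add] at h2
  intro v
  by_cases a : v = z
  · rw [a, hzz]
  · by_cases b : v = z'
    · rw [b, h2]
    · exact h1 v a b

theorem flow_main (n : ℕ) : ∀ (V : Type*) [Fintype V] [DecidableEq V] (s t : E → V) (w : V),
    Fintype.card V = n → (∀ T : Finset V, (dl s t T).card ≠ 1) →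
    ∃ (f : E → ZMod 2) (g : E → A2), (∀ v, bd s t f v = 0) ∧ (∀ v, bd s t g v = 0) ∧
      (∀ e, f e ≠ 0 ∨ g e ≠ 0) ∧ ∀ e, (s e = w ∨ t e = w) → f e = 0 := by
  induction n with
  | zero =>
    intro V _ _ s t w hV
    have := Fintype.card_eq_zero_iff.1 hV
    exact this.elim w
  | succ n ih =>
    intro V _ _ s t w hV hcut
    by_cases h3 : ∀ T : Finset V, T.Nonempty → T ≠ univ → 3 ≤ (dl s t T).card
    · exact flow_base s t w h3
    push Not at h3
    obtain ⟨T, hT1, hT2, hT3⟩ := h3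
    have hTT := hcut T
    have hred : ∀ (z z' : V) (h : z' ≠ z), ∃ (f : E → ZMod 2) (g : E → A2),
        ((∀ v, v ≠ z → v ≠ z' → bd s t f v = 0) ∧ bd s t f z + bd s t f z' = 0) ∧
        ((∀ v, v ≠ z → v ≠ z' → bd s t g v = 0) ∧ bd s t g z + bd s t g z' = 0) ∧
        (∀ e, f e ≠ 0 ∨ g e ≠ 0) ∧ ∀ e, (s e = w ∨ t e = w) → f e = 0 := by
      intro z z' h
      obtain ⟨f, g, h1, h2, h3, h4⟩ := ih {u : V // u ≠ z} (merge z z' h ∘ s) (merge z z' h ∘ t)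
        (merge z z' h w) (by
          rw [Fintype.card_subtype_compl, hV]; simp) (by
          intro T'
          have : dl (merge z z' h ∘ s) (merge z z' h ∘ t) T'
              = dl s t (univ.filter fun v => merge z z' h v ∈ T') := by
            ext e; simp [mem_dl]
          rw [this]; exact hcut _)
      refine ⟨f, g, merge_bd s t z z' h f h1, merge_bd s t z z' h g h2, h3, ?_⟩
      intro e he
      apply h4
      rcases he with he | he
      · left; simp [he]
      · right; simp [he]
    have hcases : (dl s t T).card = 0 ∨ (dl s t T).card = 2 := by omega
    rcases hcases with h0 | h2
    · obtain ⟨z, hz⟩ := hT1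
      obtain ⟨z', hz'⟩ : ∃ z', z' ∉ T := by
        by_contra h; push Not at h; exact hT2 (Finset.eq_univ_iff_forall.2 h)
      have hzz : z' ≠ z := fun h => hz' (h ▸ hz)
      obtain ⟨f, g, h1, h2, h3, h4⟩ := hred z z' hzz
      have h0' := Finset.card_eq_zero.1 h0
      exact ⟨f, g, two_zero Z2_two s t z z' f h1.1 h1.2 T hz hz' (by rw [h0']; simp),
        two_zero A2_two s t z z' g h2.1 h2.2 T hz hz' (by rw [h0']; simp), h3, h4⟩
    · obtain ⟨a, b, hab, hdl⟩ : ∃ a b, a ≠ b ∧ dl s t T = {a, b} := Finset.card_eq_two.1 h2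
      obtain ⟨a, b, hab, hdl, hw⟩ : ∃ a b, a ≠ b ∧ dl s t T = {a, b} ∧
          ((s a = w ∨ t a = w) → (s b = w ∨ t b = w)) := by
        by_cases h : (s a = w ∨ t a = w) → (s b = w ∨ t b = w)
        · exact ⟨a, b, hab, hdl, h⟩
        · exact ⟨b, a, hab.symm, by rw [hdl, Finset.pair_comm], by tauto⟩
      have ha : ¬ (s a ∈ T ↔ t a ∈ T) := by rw [← mem_dl, hdl]; simp
      obtain ⟨z, z', hz, hz', hends⟩ : ∃ z z', z ∈ T ∧ z' ∉ T ∧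
          ((s a = z ∧ t a = z') ∨ (s a = z' ∧ t a = z)) := by
        by_cases h : s a ∈ T
        · exact ⟨s a, t a, h, by tauto, by simp⟩
        · exact ⟨t a, s a, by tauto, h, by simp⟩
      have hzz : z' ≠ z := fun h => hz' (h ▸ hz)
      obtain ⟨f, g, h1, h2, h3, h4⟩ := hred z z' hzz
      have upd : ∀ {A : Type} [AddCommGroup A] (hA : ∀ a : A, a + a = 0) (f : E → A),
          ((∀ v, v ≠ z → v ≠ z' → bd s t f v = 0) ∧ bd s t f z + bd s t f z' = 0) →
          ∀ v, bd s t (fun e => if e = a then f b else f e) v = 0 := by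
        intro A _ hA f hf
        have e0 : (fun e => if e = a then f b else f e) =
            fun e => f e + (if e = a then f a + f b else 0) := by
          funext e
          split_ifs with h
          · rw [h, ← add_assoc, hA, zero_add]
          · simp
        have e1 : ∀ v, bd s t (fun e => if e = a then f a + f b else 0) v =
            (if v = z then f a + f b else 0) + (if v = z' then f a + f b else 0) := by
          intro v
          unfold bd
          rw [Finset.sum_eq_single a]
          · rcases hends with ⟨h, h'⟩ | ⟨h, h'⟩
            · simp [h, h', eq_comm]
            · rw [h, h', add_comm]; simp [eq_comm]
          · intro b _ hb; simp [hb]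
          · simp
        apply two_zero hA s t z z' _ _ _ T hz hz'
        · rw [hdl, Finset.sum_pair hab]; simp [hab.symm, hA]
        · intro v v1 v2
          rw [e0, bd_add, e1, hf.1 v v1 v2]; simp [v1, v2]
        · rw [e0, bd_add, bd_add, e1, e1]
          simp only [if_true, hzz, hzz.symm, if_false, add_zero, zero_add]
          rw [add_add_add_comm, hf.2, hA, add_zero]
      refine ⟨fun e => if e = a then f b else f e, fun e => if e = a then g b else g e,
        upd Z2_two f h1, upd A2_two g h2, ?_, ?_⟩
      · intro e
        dsimp only
        split_ifs
        · exact h3 b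
        · exact h3 e
      · intro e he
        dsimp only
        split_ifs with h
        · exact h4 b (hw (h ▸ he))
        · exact h4 e he

/-- flow on the region `Y` -/
theorem flow_region [Fintype V] (s t : E → V) (Y : Finset V)
    (hY : ∀ T ⊆ Y, (dl s t T).card ≠ 1) :
    ∃ (f : E → ZMod 2) (g : E → A2), (∀ v ∈ Y, bd s t f v = 0) ∧ (∀ v ∈ Y, bd s t g v = 0) ∧
      (∀ e, f e ≠ 0 ∨ g e ≠ 0) ∧ ∀ e, (s e ∉ Y ∨ t e ∉ Y) → f e = 0 := by
  let p : V → Option V := fun v => if v ∈ Y then some v else none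
  have hp : ∀ v u, p v = some u ↔ v = u ∧ u ∈ Y := by
    intro v u
    simp only [p]
    split_ifs with h
    · simp; intro h'; exact h' ▸ h
    · simp; intro h'; exact h' ▸ h
  have hp0 : ∀ v, p v = none ↔ v ∉ Y := by
    intro v; simp only [p]; split_ifs with h <;> simp [h]
  have hcut0 : ∀ T : Finset (Option V), none ∉ T → (dl (p ∘ s) (p ∘ t) T).card ≠ 1 := by
    intro T hT
    have hpm : ∀ v, p v ∈ T ↔ v ∈ Y ∧ some v ∈ T := by
      intro v
      simp only [p]
      split_ifs with h <;> simp [h, hT]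
    have : dl (p ∘ s) (p ∘ t) T = dl s t (Y.filter fun v => some v ∈ T) := by
      ext e; simp [mem_dl, hpm]
    rw [this]
    exact hY _ (Finset.filter_subset _ _)
  obtain ⟨f, g, h1, h2, h3, h4⟩ := flow_main _ (Option V) (p ∘ s) (p ∘ t) none rfl (by
    intro T
    by_cases h : none ∈ T
    · rw [← dl_compl]; apply hcut0; simpa using h
    · exact hcut0 T h)
  have hb : ∀ {A : Type} [AddCommGroup A] (f : E → A) (v : V), v ∈ Y →
      bd (p ∘ s) (p ∘ t) f (some v) = bd s t f v := by
    intro A _ f v hv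
    unfold bd
    refine Finset.sum_congr rfl fun e _ => ?_
    simp [hp, hv]
  refine ⟨f, g, fun v hv => by rw [← hb f v hv, h1], fun v hv => by rw [← hb g v hv, h2], h3, ?_⟩
  intro e he
  apply h4
  simpa [hp0] using he

end glue
end NC

namespace NC
open Finset
abbrev A8 := ZMod 2 × A2
abbrev C7 := {a : A8 // a ≠ 0}

theorem A8_two : ∀ a : A8, a + a = 0 := by decide
theorem C7_card : Fintype.card C7 = 7 := by decide

def OK {C : Type*} [DecidableEq C] (A B : Finset C) (k : C) : Prop := A = B ∨ A ∩ B = {k}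

theorem OK.symm {C : Type*} [DecidableEq C] {A B : Finset C} {k : C} (h : OK A B k) : OK B A k := by
  rcases h with h | h
  · exact Or.inl h.symm
  · exact Or.inr (by rw [Finset.inter_comm]; exact h)

def Ln (L : Finset C7) : Prop :=
  ∃ a b c : C7, a ≠ b ∧ a ≠ c ∧ b ≠ c ∧ a.1 + b.1 + c.1 = 0 ∧ L = {a, b, c}

theorem Ln.card {L : Finset C7} (h : Ln L) : L.card = 3 := by
  obtain ⟨a, b, c, h1, h2, h3, -, rfl⟩ := h
  rw [Finset.card_eq_three]
  exact ⟨a, b, c, h1, h2, h3, rfl⟩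

theorem A8_cyc {a b c : A8} (h : a + b + c = 0) : c = a + b := by
  have := congrArg (· + c) h
  simp only [add_assoc, A8_two, add_zero, zero_add] at this
  exact this.symm

theorem Ln.at {L : Finset C7} (h : Ln L) {k : C7} (hk : k ∈ L) :
    ∃ a b : C7, k ≠ a ∧ k ≠ b ∧ a ≠ b ∧ k.1 + a.1 + b.1 = 0 ∧ L = {k, a, b} := by
  obtain ⟨a, b, c, h1, h2, h3, h4, rfl⟩ := h
  simp only [Finset.mem_insert, Finset.mem_singleton] at hk
  rcases hk with rfl | rfl | rfl
  · exact ⟨b, c, h1, h2, h3, h4, rfl⟩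
  · refine ⟨a, c, h1.symm, h3, h2, (by abel : _ = _).trans h4, ?_⟩
    ext; simp; tauto
  · refine ⟨a, b, h2.symm, h3.symm, h1, (by abel : _ = _).trans h4, ?_⟩
    ext; simp; tauto

theorem Ln.at2 {L : Finset C7} (h : Ln L) {k a : C7} (hk : k ∈ L) (ha : a ∈ L) (hne : k ≠ a) :
    ∃ b : C7, k ≠ b ∧ a ≠ b ∧ b.1 = k.1 + a.1 ∧ L = {k, a, b} := by
  obtain ⟨a', b', h1, h2, h3, h4, rfl⟩ := h.at hk
  simp only [Finset.mem_insert, Finset.mem_singleton] at ha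
  rcases ha with rfl | rfl | rfl
  · exact absurd rfl hne
  · exact ⟨b', h2, h3, A8_cyc h4, rfl⟩
  · refine ⟨a', h1, h3.symm, A8_cyc ((by abel : _ = _).trans h4), ?_⟩
    ext; simp; tauto

theorem Ln.eq2 {L L' : Finset C7} (h : Ln L) (h' : Ln L') {k a : C7} (hk : k ∈ L) (ha : a ∈ L)
    (hk' : k ∈ L') (ha' : a ∈ L') (hne : k ≠ a) : L = L' := by
  obtain ⟨b, -, -, hb, rfl⟩ := h.at2 hk ha hne
  obtain ⟨b', -, -, hb', rfl⟩ := h'.at2 hk' ha' hne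
  have : b = b' := Subtype.ext (hb.trans hb'.symm)
  rw [this]

theorem Ln.ok {L L' : Finset C7} (h : Ln L) (h' : Ln L') {k : C7} (hk : k ∈ L)
    (hk' : k ∈ L') : OK L L' k := by
  by_cases hh : ∃ a, a ∈ L ∧ a ∈ L' ∧ k ≠ a
  · obtain ⟨a, h1, h2, h3⟩ := hh
    exact Or.inl (h.eq2 h' hk h1 hk' h2 h3)
  · right
    ext a
    simp only [Finset.mem_inter, Finset.mem_singleton]
    constructor
    · intro ⟨h1, h2⟩
      by_contra h3
      exact hh ⟨a, h1, h2, fun h => h3 h.symm⟩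
    · rintro rfl; exact ⟨hk, hk'⟩

set_option synthInstance.maxHeartbeats 400000 in
set_option synthInstance.maxSize 1000 in
theorem fano : ∀ a b a' b' : A8, a ≠ 0 → b ≠ 0 → a ≠ b → a' ≠ 0 → b' ≠ 0 → a' ≠ b' →
    a = a' ∨ a = b' ∨ a = a' + b' ∨ b = a' ∨ b = b' ∨ b = a' + b' ∨ a + b = a' ∨ a + b = b' ∨
      a + b = a' + b' := by
  decide +kernel

theorem Ln.union_card {L L' : Finset C7} (h : Ln L) (h' : Ln L') : (L ∪ L').card ≤ 5 := by
  have hne : (L ∩ L').Nonempty := by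
    obtain ⟨a, b, c, h1, h2, h3, h4, rfl⟩ := h
    obtain ⟨a', b', c', h1', h2', h3', h4', rfl⟩ := h'
    have e1 := A8_cyc h4
    have e2 := A8_cyc h4'
    have := fano a.1 b.1 a'.1 b'.1 a.2 b.2 (fun h => h1 (Subtype.ext h)) a'.2 b'.2
      (fun h => h1' (Subtype.ext h))
    rw [← e1, ← e2] at this
    simp only [← Subtype.ext_iff] at this
    rcases this with h | h | h | h | h | h | h | h | h
    · exact ⟨a, by simp [h]⟩
    · exact ⟨a, by simp [h]⟩
    · exact ⟨a, by simp [h]⟩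
    · exact ⟨b, by simp [h]⟩
    · exact ⟨b, by simp [h]⟩
    · exact ⟨b, by simp [h]⟩
    · exact ⟨c, by simp [h]⟩
    · exact ⟨c, by simp [h]⟩
    · exact ⟨c, by simp [h]⟩
  have := Finset.card_union_add_card_inter L L'
  have := hne.card_pos
  have := h.card
  have := h'.card
  omega

theorem perm_ext {C : Type*} [Finite C] {n : ℕ} (x y : Fin n → C) (hx : Function.Injective x)
    (hy : Function.Injective y) : ∃ σ : Equiv.Perm C, ∀ i, σ (x i) = y i := by
  classical
  have := Fintype.ofFinite C
  let e : {c // c ∈ Set.range x} ≃ {c // c ∈ Set.range y} :=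
    (Equiv.ofInjective x hx).symm.trans (Equiv.ofInjective y hy)
  refine ⟨e.extendSubtype, fun i => ?_⟩
  rw [Equiv.extendSubtype_apply_of_mem e (x i) ⟨i, rfl⟩]
  have : (⟨x i, ⟨i, rfl⟩⟩ : {c // c ∈ Set.range x}) = Equiv.ofInjective x hx i := rfl
  simp only [e, Equiv.trans_apply, this]
  rw [Equiv.symm_apply_apply]
  rfl

theorem perm3 {C : Type*} [Finite C] {a b c a' b' c' : C} (h1 : a ≠ b) (h2 : a ≠ c) (h3 : b ≠ c)
    (h1' : a' ≠ b') (h2' : a' ≠ c') (h3' : b' ≠ c') :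
    ∃ σ : Equiv.Perm C, σ a = a' ∧ σ b = b' ∧ σ c = c' := by
  obtain ⟨σ, h⟩ := perm_ext ![a, b, c] ![a', b', c'] (by
    rw [← List.nodup_ofFn]; simp; tauto) (by rw [← List.nodup_ofFn]; simp; tauto)
  exact ⟨σ, h 0, h 1, h 2⟩

theorem perm6 {C : Type*} [Finite C] {a b c d e f a' b' c' d' e' f' : C}
    (h : [a, b, c, d, e, f].Nodup) (h' : [a', b', c', d', e', f'].Nodup) :
    ∃ σ : Equiv.Perm C, σ a = a' ∧ σ b = b' ∧ σ c = c' ∧ σ d = d' ∧ σ e = e' ∧ σ f = f' := by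
  obtain ⟨σ, h⟩ := perm_ext ![a, b, c, d, e, f] ![a', b', c', d', e', f'] (by
    rw [← List.nodup_ofFn]; simpa using h) (by rw [← List.nodup_ofFn]; simpa using h')
  exact ⟨σ, h 0, h 1, h 2, h 3, h 4, h 5⟩

theorem perm5 {C : Type*} [Finite C] {a b c d e a' b' c' d' e' : C}
    (h : [a, b, c, d, e].Nodup) (h' : [a', b', c', d', e'].Nodup) :
    ∃ σ : Equiv.Perm C, σ a = a' ∧ σ b = b' ∧ σ c = c' ∧ σ d = d' ∧ σ e = e' := by
  obtain ⟨σ, h⟩ := perm_ext ![a, b, c, d, e] ![a', b', c', d', e'] (by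
    rw [← List.nodup_ofFn]; simpa using h) (by rw [← List.nodup_ofFn]; simpa using h')
  exact ⟨σ, h 0, h 1, h 2, h 3, h 4⟩

theorem perm4 {C : Type*} [Finite C] {a b c d a' b' c' d' : C}
    (h : [a, b, c, d].Nodup) (h' : [a', b', c', d'].Nodup) :
    ∃ σ : Equiv.Perm C, σ a = a' ∧ σ b = b' ∧ σ c = c' ∧ σ d = d' := by
  obtain ⟨σ, h⟩ := perm_ext ![a, b, c, d] ![a', b', c', d'] (by
    rw [← List.nodup_ofFn]; simpa using h) (by rw [← List.nodup_ofFn]; simpa using h')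
  exact ⟨σ, h 0, h 1, h 2, h 3⟩

set_option maxHeartbeats 2000000 in
/-- The color permutation used to glue at a 2-edge cut. -/
theorem glue_perm {c d α β : C7} {P R A B : Finset C7} (hcd : c ≠ d) (hαβ : α ≠ β)
    (hP : P.card = 2) (hR : R.card = 2) (hA : A.card = 2) (hB : B.card = 2)
    (hcP : c ∉ P) (hcR : c ∉ R) (hdR : d ∉ R) (hαA : α ∉ A) (hβB : β ∉ B)
    (hPR : P = R ∨ Disjoint P R) (hAB : (insert α A ∪ insert β B).card ≤ 5) :
    ∃ σ : Equiv.Perm C7, σ c = α ∧ σ d = β ∧ (P.image σ = A ∨ Disjoint (P.image σ) A) ∧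
      (R.image σ = B ∨ Disjoint (R.image σ) B) := by
  have ex : ∀ n, ∀ F : Finset C7, F.card + n ≤ 7 → ∃ O : Finset C7, O.card = n ∧ Disjoint O F := by
    intro n F hF
    have h1 : n ≤ Fᶜ.card := by rw [Finset.card_compl, C7_card]; omega
    obtain ⟨O, h2, h3⟩ := Finset.exists_subset_card_eq h1
    exact ⟨O, h3, Finset.disjoint_left.2 fun a h h' => by simpa [h'] using h2 h⟩
  obtain ⟨O, hO, hOd⟩ := ex 2 _ (by omega : (insert α A ∪ insert β B).card + 2 ≤ 7)
  obtain ⟨o1, o2, ho, rfl⟩ := Finset.card_eq_two.1 hO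
  obtain ⟨r1, r2, hr, rfl⟩ := Finset.card_eq_two.1 hR
  obtain ⟨p1, p2, hp, rfl⟩ := Finset.card_eq_two.1 hP
  obtain ⟨a1, a2, ha, rfl⟩ := Finset.card_eq_two.1 hA
  obtain ⟨b1, b2, hb, rfl⟩ := Finset.card_eq_two.1 hB
  simp only [Finset.disjoint_left, Finset.mem_union, Finset.mem_insert, Finset.mem_singleton,
    forall_eq_or_imp, forall_eq, not_or] at hOd hcP hcR hdR hαA hβB
  by_cases hPR' : ({p1, p2} : Finset C7) = {r1, r2}
  · obtain ⟨σ, h1, h2, h3, h4⟩ := perm4 (a := c) (b := d) (c := r1) (d := r2) (a' := α) (b' := β)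
      (c' := o1) (d' := o2) (by simp; tauto) (by simp; grind)
    refine ⟨σ, h1, h2, Or.inr ?_, Or.inr ?_⟩
    · rw [hPR']
      simp only [Finset.image_insert, Finset.image_singleton, h3, h4]
      simp [Finset.disjoint_left]; tauto
    · simp only [Finset.image_insert, Finset.image_singleton, h3, h4]
      simp [Finset.disjoint_left]; tauto
  have hdis := hPR.resolve_left hPR'
  simp only [Finset.disjoint_left, Finset.mem_insert, Finset.mem_singleton,
    forall_eq_or_imp, forall_eq, not_or] at hdis
  have main : ∀ p', p' ≠ c → p' ≠ d → p' ≠ r1 → p' ≠ r2 → ∃ σ : Equiv.Perm C7, σ c = α ∧ σ d = β ∧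
      σ r1 = o1 ∧ σ r2 = o2 ∧ (({d, p'} : Finset C7).image σ = {a1, a2} ∨
        Disjoint (({d, p'} : Finset C7).image σ) {a1, a2}) := by
    intro p' k1 k2 k3 k4
    by_cases hβ : β = a1 ∨ β = a2
    · obtain ⟨w, hw, hw2⟩ : ∃ w, ({β, w} : Finset C7) = {a1, a2} ∧ w ≠ β ∧ (w = a1 ∨ w = a2) := by
        rcases hβ with rfl | rfl
        · exact ⟨a2, rfl, ha.symm, Or.inr rfl⟩
        · exact ⟨a1, Finset.pair_comm _ _, ha, Or.inl rfl⟩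
      obtain ⟨σ, h1, h2, h3, h4, h5⟩ := perm5 (a := c) (b := d) (c := r1) (d := r2) (e := p')
        (a' := α) (b' := β) (c' := o1) (d' := o2) (e' := w) (by simp; grind) (by simp; grind)
      refine ⟨σ, h1, h2, h3, h4, Or.inl ?_⟩
      simp only [Finset.image_insert, Finset.image_singleton, h2, h5, hw]
    · obtain ⟨Q, hQ, hQd⟩ := ex 1 {a1, a2, α, β, o1, o2} (by
        have := Finset.card_le_six (a := a1) (b := a2) (c := α) (d := β) (e := o1) (f := o2); omega)
      obtain ⟨w, rfl⟩ := Finset.card_eq_one.1 hQ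
      simp only [Finset.disjoint_singleton_left, Finset.mem_insert, Finset.mem_singleton, not_or] at hQd
      obtain ⟨σ, h1, h2, h3, h4, h5⟩ := perm5 (a := c) (b := d) (c := r1) (d := r2) (e := p')
        (a' := α) (b' := β) (c' := o1) (d' := o2) (e' := w) (by simp; grind) (by simp; grind)
      refine ⟨σ, h1, h2, h3, h4, Or.inr ?_⟩
      simp only [Finset.image_insert, Finset.image_singleton, h2, h5]
      simp [Finset.disjoint_left]; tauto
  have fin : ∀ σ : Equiv.Perm C7, σ r1 = o1 → σ r2 = o2 →
      Disjoint (({r1, r2} : Finset C7).image σ) {b1, b2} := by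
    intro σ h3 h4
    simp only [Finset.image_insert, Finset.image_singleton, h3, h4]
    simp [Finset.disjoint_left]; tauto
  by_cases hd1 : p1 = d
  · subst hd1
    obtain ⟨σ, h1, h2, h3, h4, h5⟩ := main p2 (by tauto) (by tauto) (by tauto) (by tauto)
    exact ⟨σ, h1, h2, h5, Or.inr (fin σ h3 h4)⟩
  by_cases hd2 : p2 = d
  · subst hd2
    obtain ⟨σ, h1, h2, h3, h4, h5⟩ := main p1 (by tauto) (by tauto) (by tauto) (by tauto)
    rw [Finset.pair_comm] at h5
    exact ⟨σ, h1, h2, h5, Or.inr (fin σ h3 h4)⟩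
  by_cases hβ : β = a1 ∨ β = a2
  · obtain ⟨Q, hQ, hQd⟩ := ex 2 {a1, a2, α, o1, o2} (by
      have := Finset.card_le_five (a := a1) (b := a2) (c := α) (d := o1) (e := o2); omega)
    obtain ⟨w1, w2, hw, rfl⟩ := Finset.card_eq_two.1 hQ
    simp only [Finset.disjoint_left, Finset.mem_insert, Finset.mem_singleton,
      forall_eq_or_imp, forall_eq, not_or] at hQd
    obtain ⟨σ, h1, h2, h3, h4, h5, h6⟩ := perm6 (a := c) (b := d) (c := r1) (d := r2) (e := p1)
      (f := p2) (a' := α) (b' := β) (c' := o1) (d' := o2) (e' := w1) (f' := w2) (by simp; grind)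
      (by simp; grind)
    refine ⟨σ, h1, h2, Or.inr ?_, Or.inr (fin σ h3 h4)⟩
    simp only [Finset.image_insert, Finset.image_singleton, h5, h6]
    simp [Finset.disjoint_left]; tauto
  · obtain ⟨σ, h1, h2, h3, h4, h5, h6⟩ := perm6 (a := c) (b := d) (c := r1) (d := r2) (e := p1)
      (f := p2) (a' := α) (b' := β) (c' := o1) (d' := o2) (e' := a1) (f' := a2) (by simp; grind)
      (by simp; grind)
    refine ⟨σ, h1, h2, Or.inl ?_, Or.inr (fin σ h3 h4)⟩
    simp only [Finset.image_insert, Finset.image_singleton, h5, h6]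
end NC

namespace NC
open Finset
section val
variable {E V : Type*} [Fintype E] [DecidableEq E] [DecidableEq V]

def J (s t : E → V) (e : E) (u v : V) : Prop := (s e = u ∧ t e = v) ∨ (s e = v ∧ t e = u)

def inc (s t : E → V) (v : V) : Finset E := univ.filter (fun e => s e = v ∨ t e = v)

theorem mem_inc {s t : E → V} {v : V} {e : E} : e ∈ inc s t v ↔ s e = v ∨ t e = v := by
  simp [inc]

theorem J.symm {s t : E → V} {e : E} {u v : V} (h : J s t e u v) : J s t e v u := by
  unfold J at *; tauto

theorem J.inc_left {s t : E → V} {e : E} {u v : V} (h : J s t e u v) : e ∈ inc s t u := by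
  rw [mem_inc]; unfold J at h; tauto

theorem J.inc_right {s t : E → V} {e : E} {u v : V} (h : J s t e u v) : e ∈ inc s t v := by
  rw [mem_inc]; unfold J at h; tauto

theorem exists_J {s t : E → V} {e : E} {u : V} (h : e ∈ inc s t u) : ∃ v, J s t e u v := by
  rw [mem_inc] at h
  rcases h with h | h
  · exact ⟨t e, Or.inl ⟨h, rfl⟩⟩
  · exact ⟨s e, Or.inr ⟨rfl, h⟩⟩

structure Cub (s t : E → V) : Prop where
  noloop : ∀ e, s e ≠ t e
  simple : ∀ e e' u v, J s t e u v → J s t e' u v → e = e'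
  deg : ∀ v, (inc s t v).card = 3

/-- color set at a vertex -/
def cs (s t : E → V) (c : E → C7) (v : V) : Finset C7 := (inc s t v).image c

structure Valid (s t : E → V) (X : Finset V) (c : E → C7) : Prop where
  inj : ∀ v ∈ X, Set.InjOn c (inc s t v)
  ok : ∀ e u v, J s t e u v → u ∈ X → v ∈ X → OK (cs s t c u) (cs s t c v) (c e)

theorem OK.image {A B : Finset C7} {k : C7} (h : OK A B k) (σ : Equiv.Perm C7) :
    OK (A.image σ) (B.image σ) (σ k) := by
  rcases h with h | h
  · exact Or.inl (by rw [h])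
  · right
    rw [← Finset.image_inter _ _ σ.injective, h, Finset.image_singleton]

theorem cs_perm (s t : E → V) (c : E → C7) (v : V) (σ : Equiv.Perm C7) :
    cs s t (fun e => σ (c e)) v = (cs s t c v).image σ := by
  unfold cs; rw [Finset.image_image]; rfl

theorem Valid.perm {s t : E → V} {X : Finset V} {c : E → C7} (h : Valid s t X c)
    (σ : Equiv.Perm C7) : Valid s t X (fun e => σ (c e)) := by
  constructor
  · intro v hv e1 h1 e2 h2 h12
    exact h.inj v hv h1 h2 (σ.injective h12)
  · intro e u v he hu hv
    rw [cs_perm, cs_perm]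
    exact (h.ok e u v he hu hv).image σ

theorem cs_congr {s t : E → V} {c c' : E → C7} {v : V} (h : ∀ e ∈ inc s t v, c e = c' e) :
    cs s t c v = cs s t c' v := Finset.image_congr h

theorem inj_congr {s t : E → V} {c c' : E → C7} {v : V} (h : ∀ e ∈ inc s t v, c e = c' e)
    (h' : Set.InjOn c' (inc s t v)) : Set.InjOn c (inc s t v) := h'.congr fun e he => (h e he).symm

theorem glue {s t : E → V} {X1 X2 : Finset V} {c1 c2 : E → C7} (hd : Disjoint X1 X2)
    (h1 : Valid s t X1 c1) (h2 : Valid s t X2 c2)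
    (hb : ∀ e u v, J s t e u v → u ∈ X1 → v ∈ X2 → c1 e = c2 e ∧ OK (cs s t c1 u) (cs s t c2 v) (c1 e)) :
    ∃ c, Valid s t (X1 ∪ X2) c := by
  let c : E → C7 := fun e => if s e ∈ X1 ∨ t e ∈ X1 then c1 e else c2 e
  have k1 : ∀ v ∈ X1, ∀ e ∈ inc s t v, c e = c1 e := by
    intro v hv e he
    rw [mem_inc] at he
    have : s e ∈ X1 ∨ t e ∈ X1 := by rcases he with rfl | rfl <;> tauto
    simp only [c]; rw [if_pos this]
  have k2 : ∀ v ∈ X2, ∀ e ∈ inc s t v, c e = c2 e := by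
    intro v hv e he
    by_cases h : s e ∈ X1 ∨ t e ∈ X1
    · simp only [c]; rw [if_pos h]
      obtain ⟨u, hu⟩ := exists_J he
      have : u ∈ X1 := by
        have := Finset.disjoint_right.1 hd hv
        rcases hu with ⟨rfl, rfl⟩ | ⟨rfl, rfl⟩ <;> tauto
      exact (hb e u v hu.symm this hv).1
    · simp only [c]; rw [if_neg h]
  refine ⟨c, ?_, ?_⟩
  · intro v hv
    rcases Finset.mem_union.1 hv with hv | hv
    · exact inj_congr (k1 v hv) (h1.inj v hv)
    · exact inj_congr (k2 v hv) (h2.inj v hv)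
  · have cross : ∀ e u v, J s t e u v → u ∈ X1 → v ∈ X2 → OK (cs s t c u) (cs s t c v) (c e) := by
      intro e u v he hu hv
      rw [cs_congr (k1 u hu), cs_congr (k2 v hv), k1 u hu e he.inc_left]
      exact (hb e u v he hu hv).2
    intro e u v he hu hv
    rcases Finset.mem_union.1 hu with hu | hu <;> rcases Finset.mem_union.1 hv with hv | hv
    · rw [cs_congr (k1 u hu), cs_congr (k1 v hv), k1 u hu e he.inc_left]
      exact h1.ok e u v he hu hv
    · exact cross e u v he hu hv
    · exact (cross e v u he.symm hv hu).symm
    · rw [cs_congr (k2 u hu), cs_congr (k2 v hv), k2 u hu e he.inc_left]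
      exact h2.ok e u v he hu hv

theorem bd_inc {A : Type*} [AddCommMonoid A] {s t : E → V} (hC : Cub s t) (f : E → A) (v : V) :
    bd s t f v = ∑ e ∈ inc s t v, f e := by
  unfold bd inc
  rw [Finset.sum_filter]
  refine Finset.sum_congr rfl fun e _ => ?_
  have := hC.noloop e
  by_cases h1 : s e = v <;> by_cases h2 : t e = v
  · exact absurd (h1.trans h2.symm) this
  all_goals simp [h1, h2]

/-- zero-sum gives lines -/
theorem line_at {s t : E → V} (hC : Cub s t) (f : E → ZMod 2) (g : E → A2)
    (hn : ∀ e, ((f e, g e) : A8) ≠ 0) (v : V) (hf : bd s t f v = 0) (hg : bd s t g v = 0) :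
    Set.InjOn (fun e => (⟨(f e, g e), hn e⟩ : C7)) (inc s t v) ∧
      Ln (cs s t (fun e => ⟨(f e, g e), hn e⟩) v) := by
  rw [bd_inc hC] at hf hg
  obtain ⟨a, b, c, hab, hac, hbc, habc⟩ := Finset.card_eq_three.1 (hC.deg v)
  set θ : E → C7 := fun e => ⟨(f e, g e), hn e⟩ with hθ
  have hsum : (θ a).1 + (θ b).1 + (θ c).1 = 0 := by
    rw [habc, Finset.sum_insert (by simp [hab, hac]), Finset.sum_pair hbc] at hf hg
    simp only [hθ]
    refine Prod.ext ?_ ?_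
    · simpa [add_assoc] using hf
    · simpa [add_assoc] using hg
  have n1 : θ a ≠ θ b := by
    intro h
    rw [h, A8_two, zero_add] at hsum
    exact (θ c).2 hsum
  have n2 : θ a ≠ θ c := by
    intro h
    rw [h, add_right_comm, A8_two, zero_add] at hsum
    exact (θ b).2 hsum
  have n3 : θ b ≠ θ c := by
    intro h
    rw [h, add_assoc, A8_two, add_zero] at hsum
    exact (θ a).2 hsum
  constructor
  · rw [habc]
    intro x hx y hy hxy
    simp only [Finset.coe_insert, Finset.coe_singleton, Set.mem_insert_iff, Set.mem_singleton_iff] at hx hy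
    rcases hx with rfl | rfl | rfl <;> rcases hy with rfl | rfl | rfl <;> first | rfl | (exfalso; tauto)
  · refine ⟨θ a, θ b, θ c, n1, n2, n3, hsum, ?_⟩
    unfold cs
    rw [habc]
    simp

theorem valid_lines {s t : E → V} {X : Finset V} {c : E → C7}
    (h : ∀ v ∈ X, Set.InjOn c (inc s t v) ∧ Ln (cs s t c v)) : Valid s t X c := by
  refine ⟨fun v hv => (h v hv).1, fun e u v he hu hv => ?_⟩
  exact (h u hu).2.ok (h v hv).2 (Finset.mem_image_of_mem _ he.inc_left)
    (Finset.mem_image_of_mem _ he.inc_right)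

theorem flow_color [Fintype V] {s t : E → V} (hC : Cub s t) (Y : Finset V)
    (hY : ∀ T ⊆ Y, (dl s t T).card ≠ 1) : ∃ c : E → C7,
    (∀ v ∈ Y, Set.InjOn c (inc s t v) ∧ Ln (cs s t c v)) ∧
      ∑ e ∈ dl s t Y, (c e).1 = 0 := by
  obtain ⟨f, g, hf, hg, hn, -⟩ := flow_region s t Y hY
  have hn' : ∀ e, ((f e, g e) : A8) ≠ 0 := by
    intro e h
    have h1 := congrArg Prod.fst h
    have h2 := congrArg Prod.snd h
    rcases hn e with h' | h'
    · exact h' h1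
    · exact h' h2
  refine ⟨fun e => ⟨(f e, g e), hn' e⟩, fun v hv => line_at hC f g hn' v (hf v hv) (hg v hv), ?_⟩
  have h1 : ∑ e ∈ dl s t Y, f e = 0 := by
    rw [← sum_bd Z2_two]; exact Finset.sum_eq_zero hf
  have h2 : ∑ e ∈ dl s t Y, g e = 0 := by
    rw [← sum_bd A2_two]; exact Finset.sum_eq_zero hg
  refine Prod.ext ?_ ?_
  · rw [Prod.fst_sum]; exact h1
  · rw [Prod.snd_sum]; exact h2

theorem cs_card {s t : E → V} (hC : Cub s t) {c : E → C7} {v : V}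
    (h : Set.InjOn c (inc s t v)) : (cs s t c v).card = 3 := by
  unfold cs; rw [Finset.card_image_of_injOn h, hC.deg]

theorem OK_of_erase {A B : Finset C7} {k : C7} (hA : k ∈ A) (hB : k ∈ B)
    (h : A.erase k = B.erase k ∨ Disjoint (A.erase k) (B.erase k)) : OK A B k := by
  rcases h with h | h
  · left
    rw [← Finset.insert_erase hA, ← Finset.insert_erase hB, h]
  · right
    ext x
    rw [Finset.disjoint_left] at h
    have := @h x
    simp only [Finset.mem_erase] at this
    simp only [Finset.mem_inter, Finset.mem_singleton]
    constructor
    · tauto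
    · rintro rfl; exact ⟨hA, hB⟩

theorem glue1 {s t : E → V} (hC : Cub s t) {X1 X2 : Finset V} {c1 c2 : E → C7} (hd : Disjoint X1 X2)
    (h1 : Valid s t X1 c1) (h2 : Valid s t X2 c2) (hb : (betw s t X1 X2).card ≤ 1) :
    ∃ c, Valid s t (X1 ∪ X2) c := by
  by_cases hex : ∃ e u v, J s t e u v ∧ u ∈ X1 ∧ v ∈ X2
  · obtain ⟨e, u, v, he, hu, hv⟩ := hex
    have mb : ∀ e u v, J s t e u v → u ∈ X1 → v ∈ X2 → e ∈ betw s t X1 X2 := by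
      intro e u v he hu hv
      rw [mem_betw]
      rcases he with ⟨rfl, rfl⟩ | ⟨rfl, rfl⟩ <;> tauto
    have m1 : c1 e ∈ cs s t c1 u := Finset.mem_image_of_mem _ he.inc_left
    have m2 : c2 e ∈ cs s t c2 v := Finset.mem_image_of_mem _ he.inc_right
    have q1 := cs_card hC (h1.inj u hu)
    have q2 := cs_card hC (h2.inj v hv)
    have r1 := Finset.card_erase_of_mem m1
    have r2 := Finset.card_erase_of_mem m2
    rw [q1] at r1; rw [q2] at r2
    obtain ⟨a, b, hab, hab'⟩ := Finset.card_eq_two.1 r1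
    obtain ⟨a', b', hab2, hab2'⟩ := Finset.card_eq_two.1 r2
    have z1 : c1 e ∉ ({a, b} : Finset C7) := by rw [← hab']; simp
    have z2 : c2 e ∉ ({a', b'} : Finset C7) := by rw [← hab2']; simp
    simp only [Finset.mem_insert, Finset.mem_singleton, not_or] at z1 z2
    obtain ⟨σ, s1, s2, s3⟩ := perm3 z1.1 z1.2 hab z2.1 z2.2 hab2
    refine glue hd (h1.perm σ) h2 ?_
    intro e' u' v' he' hu' hv'
    have : e' = e := Finset.card_le_one.1 hb _ (mb _ _ _ he' hu' hv') _ (mb _ _ _ he hu hv)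
    subst this
    have hdis := Finset.disjoint_left.1 hd
    have : u' = u ∧ v' = v := by
      unfold J at he he'
      rcases he with ⟨rfl, rfl⟩ | ⟨rfl, rfl⟩ <;> rcases he' with ⟨rfl, rfl⟩ | ⟨rfl, rfl⟩
      · exact ⟨rfl, rfl⟩
      · exact absurd hv' (hdis hu)
      · exact absurd hv' (hdis hu)
      · exact ⟨rfl, rfl⟩
    obtain ⟨rfl, rfl⟩ := this
    refine ⟨s1, Or.inl ?_⟩
    rw [cs_perm, ← Finset.insert_erase m1, ← Finset.insert_erase m2, hab', hab2']
    simp [s1, s2, s3]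
  · exact glue hd h1 h2 fun e u v he hu hv => absurd ⟨e, u, v, he, hu, hv⟩ hex
end val
end NC

namespace NC
open Finset
section slem
variable {E V : Type*} [Fintype E] [DecidableEq E] [DecidableEq V]

theorem J.uniq {s t : E → V} {e : E} {u v u' v' : V} (h : J s t e u v) (h' : J s t e u' v') :
    (u' = u ∧ v' = v) ∨ (u' = v ∧ v' = u) := by
  rcases h with ⟨rfl, rfl⟩ | ⟨rfl, rfl⟩ <;> rcases h' with ⟨rfl, rfl⟩ | ⟨rfl, rfl⟩ <;> simp

theorem J.ne {s t : E → V} (hC : Cub s t) {e : E} {u v : V} (h : J s t e u v) : u ≠ v := by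
  have := hC.noloop e
  rcases h with ⟨rfl, rfl⟩ | ⟨rfl, rfl⟩
  · exact this
  · exact this.symm

theorem J.mem_inc_iff {s t : E → V} {e : E} {u v w : V} (h : J s t e u v) :
    e ∈ inc s t w ↔ w = u ∨ w = v := by
  rw [mem_inc]
  rcases h with ⟨rfl, rfl⟩ | ⟨rfl, rfl⟩
  · simp [eq_comm]
  · simp [eq_comm, or_comm]

theorem J.mem_dl_iff {s t : E → V} {e : E} {u v : V} {T : Finset V} (h : J s t e u v) :
    e ∈ dl s t T ↔ ¬ (u ∈ T ↔ v ∈ T) := by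
  rw [mem_dl]
  rcases h with ⟨rfl, rfl⟩ | ⟨rfl, rfl⟩
  · rfl
  · tauto

theorem J_of_dl {s t : E → V} {e : E} {T : Finset V} (h : e ∈ dl s t T) :
    ∃ u v, J s t e u v ∧ u ∈ T ∧ v ∉ T := by
  rw [mem_dl] at h
  by_cases h1 : s e ∈ T
  · exact ⟨s e, t e, Or.inl ⟨rfl, rfl⟩, h1, by tauto⟩
  · exact ⟨t e, s e, Or.inr ⟨rfl, rfl⟩, by tauto, h1⟩

theorem inc_erase {s t : E → V} (hC : Cub s t) {e : E} {v : V} (h : e ∈ inc s t v) :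
    ∃ a b, a ≠ b ∧ a ≠ e ∧ b ≠ e ∧ inc s t v = {e, a, b} := by
  have h1 := Finset.card_erase_of_mem h
  rw [hC.deg] at h1
  obtain ⟨a, b, hab, hab'⟩ := Finset.card_eq_two.1 h1
  have : e ∉ ({a, b} : Finset E) := by rw [← hab']; simp
  simp only [Finset.mem_insert, Finset.mem_singleton, not_or] at this
  refine ⟨a, b, hab, fun h => this.1 h.symm, fun h => this.2 h.symm, ?_⟩
  rw [← hab', Finset.insert_erase h]

theorem A2_split : ∀ γ : A2, γ ≠ 0 → ∃ a b : A2, a ≠ 0 ∧ b ≠ 0 ∧ a ≠ b ∧ γ ≠ a ∧ γ ≠ b ∧ γ + a + b = 0 := by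
  decide

theorem ends_ne {s t : E → V} (hC : Cub s t) {S : Finset V} {ex ey : E} {x y p q : V}
    (hxy : ex ≠ ey) (hx : J s t ex x p) (hxS : x ∈ S) (hp : p ∉ S)
    (hy : J s t ey y q) (hq : q ∉ S)
    (outS : ∀ e u v, J s t e u v → u ∈ S → v ∉ S → (e = ex ∧ u = x ∧ v = p) ∨ (e = ey ∧ u = y ∧ v = q))
    (hmin : ∀ T ⊂ S, T.Nonempty → 3 ≤ (dl s t T).card) : x ≠ y := by
  rintro rfl
  obtain ⟨a, b, hab, ha, hb, hi⟩ := inc_erase hC hx.inc_left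
  have hey : ey ∈ inc s t x := hy.inc_left
  obtain ⟨e3, h3x, h3y, hi3⟩ : ∃ e3, e3 ≠ ex ∧ e3 ≠ ey ∧ inc s t x = {ex, ey, e3} := by
    have h' := hey
    rw [hi] at h'
    simp only [Finset.mem_insert, Finset.mem_singleton] at h'
    rcases h' with h' | h' | h'
    · exact absurd h'.symm hxy
    · subst h'; exact ⟨b, hb, hab.symm, hi⟩
    · subst h'; exact ⟨a, ha, hab, by rw [hi]; ext; simp; tauto⟩
  obtain ⟨w, hw⟩ := exists_J (show e3 ∈ inc s t x by rw [hi3]; simp)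
  have hwS : w ∈ S := by
    by_contra h
    rcases outS e3 x w hw hxS h with h | h <;> tauto
  have hwx := hw.ne hC
  have := hmin (S.erase x) (Finset.erase_ssubset hxS) ⟨w, by simp [hwS, hwx.symm]⟩
  have hsub : dl s t (S.erase x) ⊆ {e3} := by
    intro e he
    obtain ⟨u, v, hJ, hu, hv⟩ := J_of_dl he
    simp only [Finset.mem_erase, not_and] at hu hv
    by_cases hvS : v ∈ S
    · have : v = x := by by_contra h; exact hv h hvS
      subst this
      have := hJ.inc_right
      rw [hi3] at this
      simp only [Finset.mem_insert, Finset.mem_singleton] at this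
      rcases this with h | h | h
      · subst h
        rcases hx.uniq hJ with h | h
        · tauto
        · rw [h.1] at hu; tauto
      · subst h
        rcases hy.uniq hJ with h | h
        · tauto
        · rw [h.1] at hu; tauto
      · simp [h]
    · rcases outS e u v hJ hu.2 hvS with h | h <;> tauto
  have := Finset.card_le_card hsub
  simp at this
  omega

theorem s_menger {s t : E → V} {S : Finset V} {ex ey a' a'' : E}
    {x y p q y' y'' : V} (hyS : y ∈ S) (hq : q ∉ S) (hxy : x ≠ y)
    (hy : J s t ey y q)
    (outS : ∀ e u v, J s t e u v → u ∈ S → v ∉ S → (e = ex ∧ u = x ∧ v = p) ∨ (e = ey ∧ u = y ∧ v = q))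
    (hmin : ∀ T ⊂ S, T.Nonempty → 3 ≤ (dl s t T).card)
    (hi : inc s t y = {ey, a', a''}) (h' : J s t a' y y') (h'' : J s t a'' y y'')
    (hy' : y' ∈ S.erase y) (hy'' : y'' ∈ S.erase y) (T : Finset V) (hT' : y' ∈ T) (hT'' : y'' ∉ T) :
    2 ≤ dF s t (univ.filter fun e => s e ∈ S.erase y ∧ t e ∈ S.erase y) T := by
  set F := univ.filter fun e => s e ∈ S.erase y ∧ t e ∈ S.erase y with hF
  by_contra hcon
  have hJF : ∀ e u v, J s t e u v → (e ∈ F ↔ u ∈ S.erase y ∧ v ∈ S.erase y) := by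
    intro e u v hJ
    simp only [hF, Finset.mem_filter, Finset.mem_univ, true_and]
    rcases hJ with ⟨rfl, rfl⟩ | ⟨rfl, rfl⟩ <;> tauto
  have gen : ∀ Q : Finset V, Q ⊆ S.erase y → Q.Nonempty → x ∉ Q → ∀ a : E,
      (∀ e ∈ inc s t y, ∀ u, J s t e u y → u ∈ Q → e = a) →
      (∀ e u v, J s t e u v → u ∈ Q → v ∈ S.erase y → v ∉ Q → ¬ (u ∈ T ↔ v ∈ T)) → False := by
    intro Q hQ hQne hxQ a hQa hQT
    have hQS : Q ⊂ S := lt_of_le_of_lt hQ (Finset.erase_ssubset hyS)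
    have h3 := hmin Q hQS hQne
    have hsub : dl s t Q ⊆ insert a (F.filter (fun e => ¬ (s e ∈ T ↔ t e ∈ T))) := by
      intro e he
      obtain ⟨u, v, hJ, hu, hv⟩ := J_of_dl he
      have huS := hQ hu
      by_cases hvS : v ∈ S
      · by_cases hvy : v = y
        · subst hvy
          rw [hQa e hJ.inc_right u hJ hu]; simp
        · have hv' : v ∈ S.erase y := by simp [hvy, hvS]
          have := hQT e u v hJ hu hv' hv
          rw [← hJ.mem_dl_iff, mem_dl] at this
          refine Finset.mem_insert_of_mem (Finset.mem_filter.2 ⟨(hJF e u v hJ).2 ⟨huS, hv'⟩, this⟩)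
      · rcases outS e u v hJ (Finset.mem_of_mem_erase huS) hvS with h | h
        · rw [h.2.1] at hu; exact absurd hu hxQ
        · rw [h.2.1] at huS; simp at huS
    have := Finset.card_le_card hsub
    have := this.trans (Finset.card_insert_le _ _)
    unfold dF at hcon
    omega
  have incy : ∀ e u, e ∈ inc s t y → J s t e u y → u ∈ S.erase y → (e = a' ∧ u = y') ∨ (e = a'' ∧ u = y'') := by
    intro e u he hJ hu
    rw [hi] at he
    simp only [Finset.mem_erase] at hu
    simp only [Finset.mem_insert, Finset.mem_singleton] at he
    rcases he with rfl | rfl | rfl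
    · rcases hy.uniq hJ with h | h
      · exact absurd h.1 hu.1
      · exact absurd (h.1 ▸ hu.2) hq
    · rcases h'.uniq hJ with h | h
      · exact absurd h.1 hu.1
      · exact Or.inl ⟨rfl, h.1⟩
    · rcases h''.uniq hJ with h | h
      · exact absurd h.1 hu.1
      · exact Or.inr ⟨rfl, h.1⟩
  by_cases hxT : x ∈ T
  · refine gen (S.erase y \ T) Finset.sdiff_subset ⟨y'', by simp only [Finset.mem_sdiff]; exact ⟨hy'', hT''⟩⟩ (by simp [hxT]) a'' ?_ ?_
    · intro e he u hJ hu
      simp only [Finset.mem_sdiff] at hu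
      rcases incy e u he hJ hu.1 with h | h
      · exact absurd (h.2 ▸ hT') hu.2
      · exact h.1
    · intro e u v hJ hu hv hv2
      simp only [Finset.mem_sdiff] at hu hv2
      tauto
  · refine gen (S.erase y ∩ T) Finset.inter_subset_left ⟨y', by simp only [Finset.mem_inter]; exact ⟨hy', hT'⟩⟩ (by simp [hxT]) a' ?_ ?_
    · intro e he u hJ hu
      simp only [Finset.mem_inter] at hu
      rcases incy e u he hJ hu.1 with h | h
      · exact h.1
      · exact absurd (h.2 ▸ hu.2) hT''
    · intro e u v hJ hu hv hv2
      simp only [Finset.mem_inter] at hu hv2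
      tauto

/-- the flow on `S - y` -/
theorem s_flow [Fintype V] {s t : E → V} (hC : Cub s t) {S : Finset V} {ex ey a' a'' : E}
    {x y p q y' y'' : V} (hxS : x ∈ S) (hyS : y ∈ S) (hp : p ∉ S) (hq : q ∉ S) (hxy : x ≠ y)
    (hx : J s t ex x p) (hy : J s t ey y q)
    (outS : ∀ e u v, J s t e u v → u ∈ S → v ∉ S → (e = ex ∧ u = x ∧ v = p) ∨ (e = ey ∧ u = y ∧ v = q))
    (hmin : ∀ T ⊂ S, T.Nonempty → 3 ≤ (dl s t T).card)
    (ha : a' ≠ a'')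
    (hi : inc s t y = {ey, a', a''}) (h' : J s t a' y y') (h'' : J s t a'' y y'')
    (hy' : y' ∈ S.erase y) (hy'' : y'' ∈ S.erase y) :
    ∃ (f : E → ZMod 2) (g : E → A2), (∀ e, ((f e, g e) : A8) ≠ 0) ∧
      (∀ v ∈ S.erase y, bd s t f v = 0) ∧ (∀ v ∈ S.erase y, bd s t g v = 0) ∧
      f a' = 0 ∧ f a'' = 0 ∧ f ex = 0 ∧ g ex + g a' + g a'' = 0 ∧
      (∃ e ∈ inc s t y', f e ≠ 0) ∧ (∃ e ∈ inc s t y'', f e ≠ 0) := by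
  have hyy : y' ≠ y'' := by
    rintro rfl
    exact ha (hC.simple _ _ _ _ h' h'')
  obtain ⟨z0, hz1, hz2, hz3⟩ := menger s t y' y'' _
    (fun T => s_menger hyS hq hxy hy outS hmin hi h' h'' hy' hy'' T)
  obtain ⟨W, z, hWS, hy'W, hy''W, ⟨hzb, hzW, hzs⟩, hinc⟩ := comp_span A2 A2_two s t y' y'' (S.erase y) hy' z0
    (fun e he => by simpa using hz1 e he) hz2 hz3
  have hinc := hinc hyy
  set Y := S.erase y \ W with hY
  have hYS : Y ⊆ S.erase y := Finset.sdiff_subset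
  obtain ⟨f, g, hf, hg, hfg, hfY⟩ := flow_region s t Y (by
    intro T hT
    rcases T.eq_empty_or_nonempty with rfl | hne
    · simp [dl]
    · have := hmin T (lt_of_le_of_lt (hT.trans hYS) (Finset.erase_ssubset hyS)) hne
      omega)
  have zJ : ∀ e u v, J s t e u v → z e ≠ 0 → u ∈ W ∧ v ∈ W := by
    intro e u v hJ h
    have := hzW e h
    rcases hJ with ⟨rfl, rfl⟩ | ⟨rfl, rfl⟩ <;> tauto
  have fJ : ∀ e u v, J s t e u v → u ∉ Y → f e = 0 := by
    intro e u v hJ h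
    apply hfY
    rcases hJ with ⟨rfl, rfl⟩ | ⟨rfl, rfl⟩ <;> tauto
  let tY : E → Prop := fun e => s e ∈ Y ∨ t e ∈ Y
  have tJ : ∀ e u v, J s t e u v → (tY e ↔ u ∈ Y ∨ v ∈ Y) := by
    intro e u v hJ
    rcases hJ with ⟨rfl, rfl⟩ | ⟨rfl, rfl⟩
    · rfl
    · exact or_comm
  have hWY : ∀ v ∈ W, v ∉ Y := fun v h => by simp [hY, h]
  have hyY : y ∉ Y := fun h => by simpa using hYS h
  have hyW : y ∉ W := fun h => by simpa using hWS h
  have hpY : p ∉ Y := fun h => hp (Finset.mem_of_mem_erase (hYS h))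
  have hpW : p ∉ W := fun h => hp (Finset.mem_of_mem_erase (hWS h))
  classical
  let γ : A2 := if tY ex then g ex else (1, 0)
  have hγ : γ ≠ 0 := by
    simp only [γ]
    split_ifs with h
    · exact (hfg ex).resolve_left (fun h => h (fJ ex p x hx.symm hpY))
    · decide
  obtain ⟨γ', γ'', g1, g2, g3, g4, g5, g6⟩ := A2_split γ hγ
  have ta' : ¬ tY a' := by rw [tJ _ _ _ h']; simp [hyY, hWY _ hy'W]
  have ta'' : ¬ tY a'' := by rw [tJ _ _ _ h'']; simp [hyY, hWY _ hy''W]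
  have exa' : ex ≠ a' := by
    rintro rfl
    rcases hx.uniq h' with h | h
    · exact hxy h.1.symm
    · exact hp (h.1 ▸ hyS)
  have exa'' : ex ≠ a'' := by
    rintro rfl
    rcases hx.uniq h'' with h | h
    · exact hxy h.1.symm
    · exact hp (h.1 ▸ hyS)
  let g0 : E → A2 := fun e => if tY e then g e else if e = a' then γ' else if e = a'' then γ'' else
    if e = ex then γ else if z e ≠ 0 then 0 else (1, 0)
  have g0a' : g0 a' = γ' := by simp [g0, ta']
  have g0a'' : g0 a'' = γ'' := by simp [g0, ta'', ha.symm]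
  have g0x : g0 ex = γ := by
    simp only [g0]
    by_cases h : tY ex
    · simp [γ, h]
    · simp [h, exa', exa'']
  have g0Y : ∀ v ∈ Y, bd s t g0 v = 0 := by
    intro v hv
    rw [← hg v hv, bd_inc hC, bd_inc hC]
    refine Finset.sum_congr rfl fun e he => ?_
    have : tY e := by
      rw [mem_inc] at he
      rcases he with rfl | rfl
      · exact Or.inl hv
      · exact Or.inr hv
    simp [g0, this]
  have hdl : dl s t (S.erase y) = {ex, a', a''} := by
    ext e
    simp only [Finset.mem_insert, Finset.mem_singleton]
    constructor
    · intro he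
      obtain ⟨u, v, hJ, hu, hv⟩ := J_of_dl he
      simp only [Finset.mem_erase, not_and] at hu hv
      by_cases hvy : v = y
      · subst hvy
        have := hJ.inc_right
        rw [hi] at this
        simp only [Finset.mem_insert, Finset.mem_singleton] at this
        rcases this with rfl | h | h
        · rcases hy.uniq hJ with h | h
          · exact absurd h.1 hu.1
          · exact absurd (h.1 ▸ hu.2) hq
        · tauto
        · tauto
      · rcases outS e u v hJ hu.2 (hv hvy) with h | h
        · exact Or.inl h.1
        · exact absurd h.2.1 hu.1
    · rintro (rfl | rfl | rfl)
      · rw [hx.mem_dl_iff]; simp [hxS, hxy, hp]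
      · rw [h'.mem_dl_iff]; simp only [Finset.mem_erase] at hy' ⊢; simp [hy']
      · rw [h''.mem_dl_iff]; simp only [Finset.mem_erase] at hy'' ⊢; simp [hy'']
  have hsumW : ∑ v ∈ W, bd s t g0 v = 0 := by
    have h1 : ∑ v ∈ S.erase y, bd s t g0 v = 0 := by
      rw [sum_bd A2_two, hdl, Finset.sum_insert (by simp [exa', exa'']), Finset.sum_pair ha,
        g0a', g0a'', g0x, ← add_assoc, g6]
    rw [← Finset.sum_sdiff hWS, Finset.sum_eq_zero g0Y, zero_add] at h1
    exact h1
  obtain ⟨h, hh1, hh2⟩ := hzs (fun v => bd s t g0 v) hsumW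
  have hz0 : ∀ e u v, J s t e u v → u ∉ W → z e = 0 ∧ h e = 0 := by
    intro e u v hJ hu
    have : z e = 0 := by
      by_contra hz; exact hu (zJ e u v hJ hz).1
    exact ⟨this, by by_contra hz; exact hh1 e hz this⟩
  refine ⟨fun e => z e + f e, fun e => g0 e + h e, ?_, ?_, ?_, ?_, ?_, ?_, ?_, ?_, ?_⟩
  · intro e he
    have e1 : z e + f e = 0 := congrArg Prod.fst he
    have e2 : g0 e + h e = 0 := congrArg Prod.snd he
    by_cases htY : tY e
    · have : ∃ u v, J s t e u v ∧ u ∈ Y := by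
        rcases htY with h | h
        · exact ⟨s e, t e, Or.inl ⟨rfl, rfl⟩, h⟩
        · exact ⟨t e, s e, Or.inr ⟨rfl, rfl⟩, h⟩
      obtain ⟨u, v, hJ, hu⟩ := this
      obtain ⟨q1, q2⟩ := hz0 e u v hJ (fun h => hWY u h hu)
      rw [q1, zero_add] at e1
      rw [q2, add_zero] at e2
      simp only [g0, if_pos htY] at e2
      rcases hfg e with k | k
      · exact k e1
      · exact k e2
    · have hfe : f e = 0 := fJ e (s e) (t e) (Or.inl ⟨rfl, rfl⟩) (fun hh => htY (Or.inl hh))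
      rw [hfe, add_zero] at e1
      have : h e = 0 := by by_contra hz; exact hh1 e hz e1
      rw [this, add_zero] at e2
      simp only [g0, if_neg htY, e1] at e2
      revert e2
      split_ifs
      · exact g1
      · exact g2
      · exact hγ
      · tauto
      · decide
  · intro v hv
    rw [bd_add, hzb, zero_add]
    by_cases hvY : v ∈ Y
    · exact hf v hvY
    · rw [bd_inc hC]
      refine Finset.sum_eq_zero fun e he => ?_
      obtain ⟨u, hJ⟩ := exists_J he
      exact fJ e v u hJ hvY
  · intro v hv
    rw [bd_add]
    by_cases hvW : v ∈ W
    · rw [hh2 v hvW, A2_two]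
    · have : v ∈ Y := by simp only [hY, Finset.mem_sdiff]; exact ⟨hv, hvW⟩
      rw [g0Y v this, zero_add, bd_inc hC]
      refine Finset.sum_eq_zero fun e he => ?_
      obtain ⟨u, hJ⟩ := exists_J he
      exact (hz0 e v u hJ hvW).2
  · beta_reduce; rw [(hz0 _ _ _ h' hyW).1, fJ _ _ _ h' hyY, add_zero]
  · beta_reduce; rw [(hz0 _ _ _ h'' hyW).1, fJ _ _ _ h'' hyY, add_zero]
  · beta_reduce; rw [(hz0 _ _ _ hx.symm hpW).1, fJ _ _ _ hx.symm hpY, add_zero]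
  · beta_reduce
    rw [(hz0 _ _ _ h' hyW).2, (hz0 _ _ _ h'' hyW).2, (hz0 _ _ _ hx.symm hpW).2, g0a', g0a'', g0x,
      add_zero, add_zero, add_zero, g6]
  · obtain ⟨e, he, hi⟩ := hinc y' hy'W
    refine ⟨e, mem_inc.2 hi, ?_⟩
    beta_reduce
    rw [fJ e (s e) (t e) (Or.inl ⟨rfl, rfl⟩) (hWY _ (hzW e he).1), add_zero]; exact he
  · obtain ⟨e, he, hi⟩ := hinc y'' hy''W
    refine ⟨e, mem_inc.2 hi, ?_⟩
    beta_reduce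
    rw [fJ e (s e) (t e) (Or.inl ⟨rfl, rfl⟩) (hWY _ (hzW e he).1), add_zero]; exact he
end slem
end NC

namespace NC
open Finset
section rc
variable {E V : Type*} [Fintype E] [DecidableEq E] [DecidableEq V]

theorem s_color [Fintype V] {s t : E → V} (hC : Cub s t) {S : Finset V} {ex ey : E}
    {x y p q : V} (hexy : ex ≠ ey) (hxS : x ∈ S) (hyS : y ∈ S) (hp : p ∉ S) (hq : q ∉ S)
    (hx : J s t ex x p) (hy : J s t ey y q)
    (outS : ∀ e u v, J s t e u v → u ∈ S → v ∉ S → (e = ex ∧ u = x ∧ v = p) ∨ (e = ey ∧ u = y ∧ v = q))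
    (hmin : ∀ T ⊂ S, T.Nonempty → 3 ≤ (dl s t T).card) :
    ∃ c, Valid s t S c ∧ c ex ≠ c ey ∧ c ex ∉ cs s t c y ∧
      ((cs s t c x).erase (c ex) = (cs s t c y).erase (c ey) ∨
        Disjoint ((cs s t c x).erase (c ex)) ((cs s t c y).erase (c ey))) := by
  have hxy : x ≠ y := ends_ne hC hexy hx hxS hp hy hq outS hmin
  obtain ⟨a', a'', haa, ha', ha'', hi⟩ := inc_erase hC hy.inc_left
  obtain ⟨y', h'⟩ := exists_J (show a' ∈ inc s t y by rw [hi]; simp)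
  obtain ⟨y'', h''⟩ := exists_J (show a'' ∈ inc s t y by rw [hi]; simp)
  have hy' : y' ∈ S.erase y := by
    rw [Finset.mem_erase]
    refine ⟨(h'.ne hC).symm, ?_⟩
    by_contra h
    rcases outS _ _ _ h' hyS h with h | h
    · exact hxy h.2.1.symm
    · exact ha' h.1
  have hy'' : y'' ∈ S.erase y := by
    rw [Finset.mem_erase]
    refine ⟨(h''.ne hC).symm, ?_⟩
    by_contra h
    rcases outS _ _ _ h'' hyS h with h | h
    · exact hxy h.2.1.symm
    · exact ha'' h.1
  obtain ⟨f, g, hn, hf, hg, fa', fa'', fx, gsum, ⟨b1, hb1, fb1⟩, ⟨b2, hb2, fb2⟩⟩ :=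
    s_flow hC hxS hyS hp hq hxy hx hy outS hmin haa hi h' h'' hy' hy''
  set θ : E → C7 := fun e => ⟨(f e, g e), hn e⟩ with hθ
  have line : ∀ v ∈ S.erase y, Set.InjOn θ (inc s t v) ∧ Ln (cs s t θ v) := fun v hv =>
    line_at hC f g hn v (hf v hv) (hg v hv)
  have hsum : (θ ex).1 + (θ a').1 + (θ a'').1 = 0 := by
    refine Prod.ext ?_ gsum
    show f ex + f a' + f a'' = 0
    rw [fa', fa'', fx]; rfl
  have n1 : θ ex ≠ θ a' := by
    intro h
    rw [h, A8_two, zero_add] at hsum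
    exact (θ a'').2 hsum
  have n2 : θ ex ≠ θ a'' := by
    intro h
    rw [h, add_right_comm, A8_two, zero_add] at hsum
    exact (θ a').2 hsum
  have n3 : θ a' ≠ θ a'' := by
    intro h
    rw [h, add_assoc, A8_two, add_zero] at hsum
    exact (θ ex).2 hsum
  set L : Finset C7 := {θ ex, θ a', θ a''} with hL
  have LL : Ln L := ⟨θ ex, θ a', θ a'', n1, n2, n3, hsum, rfl⟩
  have m1 : θ a' ∈ cs s t θ y' := Finset.mem_image_of_mem _ h'.inc_right
  have m2 : θ a'' ∈ cs s t θ y'' := Finset.mem_image_of_mem _ h''.inc_right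
  have fL : ∀ a ∈ L, a.1.1 = 0 := by
    intro a ha
    simp only [hL, Finset.mem_insert, Finset.mem_singleton] at ha
    rcases ha with rfl | rfl | rfl
    · exact fx
    · exact fa'
    · exact fa''
  have L1 : cs s t θ y' ∩ L = {θ a'} := by
    refine ((line y' hy').2.ok LL m1 (by simp [hL])).resolve_left ?_
    intro h
    exact fb1 (fL (θ b1) (h ▸ Finset.mem_image_of_mem _ hb1))
  have L2 : cs s t θ y'' ∩ L = {θ a''} := by
    refine ((line y'' hy'').2.ok LL m2 (by simp [hL])).resolve_left ?_
    intro h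
    exact fb2 (fL (θ b2) (h ▸ Finset.mem_image_of_mem _ hb2))
  obtain ⟨d, hd⟩ : ∃ d, d ∉ insert (θ ex) (cs s t θ y' ∪ cs s t θ y'') := by
    by_contra hcon
    push Not at hcon
    have h1 := (line y' hy').2.union_card (line y'' hy'').2
    have h2 := Finset.card_insert_le (θ ex) (cs s t θ y' ∪ cs s t θ y'')
    rw [Finset.eq_univ_iff_forall.2 hcon, Finset.card_univ, C7_card] at h2
    omega
  simp only [Finset.mem_insert, Finset.mem_union, not_or] at hd
  obtain ⟨d1, d2, d3⟩ := hd
  have da' : d ≠ θ a' := fun h => d2 (h ▸ m1)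
  have da'' : d ≠ θ a'' := fun h => d3 (h ▸ m2)
  let c : E → C7 := fun e => if e = ey then d else θ e
  have cne : ∀ e, e ≠ ey → c e = θ e := fun e he => by simp [c, he]
  have cy : c ey = d := by simp [c]
  have hcg : ∀ v ∈ S.erase y, ∀ e ∈ inc s t v, c e = θ e := by
    intro v hv e he
    apply cne
    rintro rfl
    rw [hy.mem_inc_iff] at he
    simp only [Finset.mem_erase] at hv
    rcases he with rfl | rfl
    · exact hv.1 rfl
    · exact hq hv.2
  have csy : cs s t c y = {d, θ a', θ a''} := by
    unfold cs
    rw [hi]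
    simp [cy, cne a' ha', cne a'' ha'']
  have cse : ∀ v ∈ S.erase y, cs s t c v = cs s t θ v := fun v hv => cs_congr (hcg v hv)
  have okA : ∀ a ∈ cs s t θ y', a = d ∨ a = θ a' ∨ a = θ a'' → a = θ a' := by
    intro a ha h
    rcases h with h | h | h
    · exact absurd (h ▸ ha) d2
    · exact h
    · have : a ∈ cs s t θ y' ∩ L := by rw [Finset.mem_inter]; exact ⟨ha, by simp [hL, h]⟩
      rw [L1] at this; simpa using this
  have okB : ∀ a ∈ cs s t θ y'', a = d ∨ a = θ a' ∨ a = θ a'' → a = θ a'' := by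
    intro a ha h
    rcases h with h | h | h
    · exact absurd (h ▸ ha) d3
    · have : a ∈ cs s t θ y'' ∩ L := by rw [Finset.mem_inter]; exact ⟨ha, by simp [hL, h]⟩
      rw [L2] at this; simpa using this
    · exact h
  have oky : ∀ e v, J s t e y v → v ∈ S → OK (cs s t c y) (cs s t c v) (c e) := by
    intro e v hJ hv
    have hvy : v ∈ S.erase y := by rw [Finset.mem_erase]; exact ⟨(hJ.ne hC).symm, hv⟩
    rw [csy, cse v hvy]
    have := hJ.inc_left
    rw [hi] at this
    simp only [Finset.mem_insert, Finset.mem_singleton] at this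
    rcases this with rfl | rfl | rfl
    · rcases hy.uniq hJ with h | h
      · exact absurd (h.2 ▸ hv) hq
      · exact absurd (h.1 ▸ hyS) hq
    · have : v = y' := by
        rcases h'.uniq hJ with h | h
        · exact h.2
        · exact absurd h.1 (h'.ne hC)
      subst this
      right
      rw [cne e ha']
      ext a
      simp only [Finset.mem_inter, Finset.mem_insert, Finset.mem_singleton]
      constructor
      · intro h; exact okA a h.2 h.1
      · rintro rfl; exact ⟨by tauto, m1⟩
    · have : v = y'' := by
        rcases h''.uniq hJ with h | h
        · exact h.2
        · exact absurd h.1 (h''.ne hC)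
      subst this
      right
      rw [cne e ha'']
      ext a
      simp only [Finset.mem_inter, Finset.mem_insert, Finset.mem_singleton]
      constructor
      · intro h; exact okB a h.2 h.1
      · rintro rfl; exact ⟨by tauto, m2⟩
  have hxe : x ∈ S.erase y := by rw [Finset.mem_erase]; exact ⟨hxy, hxS⟩
  refine ⟨c, ⟨?_, ?_⟩, ?_, ?_, ?_⟩
  · intro v hv
    by_cases hvy : v = y
    · subst hvy
      rw [hi]
      intro e1 h1 e2 h2 h12
      simp only [Finset.coe_insert, Finset.coe_singleton, Set.mem_insert_iff, Set.mem_singleton_iff] at h1 h2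
      rcases h1 with rfl | rfl | rfl <;> rcases h2 with rfl | rfl | rfl <;>
        first
        | rfl
        | (exfalso
           simp only [cy, cne _ ha', cne _ ha''] at h12
           first
           | exact da' h12
           | exact da'' h12
           | exact n3 h12
           | exact da' h12.symm
           | exact da'' h12.symm
           | exact n3 h12.symm)
    · have : v ∈ S.erase y := by rw [Finset.mem_erase]; exact ⟨hvy, hv⟩
      exact inj_congr (hcg v this) (line v this).1
  · intro e u v hJ hu hv
    by_cases huy : u = y
    · subst huy; exact oky e v hJ hv
    by_cases hvy : v = y
    · subst hvy; exact (oky e u hJ.symm hu).symm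
    have hu' : u ∈ S.erase y := by rw [Finset.mem_erase]; exact ⟨huy, hu⟩
    have hv' : v ∈ S.erase y := by rw [Finset.mem_erase]; exact ⟨hvy, hv⟩
    rw [cse u hu', cse v hv', hcg u hu' e hJ.inc_left]
    exact (line u hu').2.ok (line v hv').2 (Finset.mem_image_of_mem _ hJ.inc_left)
      (Finset.mem_image_of_mem _ hJ.inc_right)
  · rw [cy, cne ex hexy]; exact fun h => d1 h.symm
  · rw [csy, cne ex hexy]
    simp only [Finset.mem_insert, Finset.mem_singleton, not_or]
    exact ⟨fun h => d1 h.symm, n1, n2⟩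
  · rw [csy, cy, cse x hxe, cne ex hexy]
    have e1 : ({d, θ a', θ a''} : Finset C7).erase d = L.erase (θ ex) := by
      rw [Finset.erase_insert (by simp [da', da'']), hL, Finset.erase_insert (by simp [n1, n2])]
    rw [e1]
    rcases (line x hxe).2.ok LL (Finset.mem_image_of_mem _ hx.inc_left) (by simp [hL]) with h | h
    · left; rw [h]
    · right
      rw [Finset.disjoint_left]
      intro a h1 h2
      rw [Finset.mem_erase] at h1 h2
      have : a ∈ cs s t θ x ∩ L := Finset.mem_inter.2 ⟨h1.2, h2.2⟩
      rw [h] at this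
      exact h1.1 (by simpa using this)

theorem glue2 {s t : E → V} (hC : Cub s t) {S Z : Finset V} (hd : Disjoint S Z) {ex ey : E}
    {x y p q : V} (hxS : x ∈ S) (hyS : y ∈ S) (hp : p ∈ Z) (hq : q ∈ Z)
    (hx : J s t ex x p) (hy : J s t ey y q)
    (outS : ∀ e u v, J s t e u v → u ∈ S → v ∉ S → (e = ex ∧ u = x ∧ v = p) ∨ (e = ey ∧ u = y ∧ v = q))
    {c : E → C7} (hV : Valid s t S c) (hc1 : c ex ≠ c ey) (hc2 : c ex ∉ cs s t c y)
    (hc3 : (cs s t c x).erase (c ex) = (cs s t c y).erase (c ey) ∨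
        Disjoint ((cs s t c x).erase (c ex)) ((cs s t c y).erase (c ey)))
    {c2 : E → C7} (hl : ∀ v ∈ Z, Set.InjOn c2 (inc s t v) ∧ Ln (cs s t c2 v)) (hne : c2 ex ≠ c2 ey) :
    ∃ c, Valid s t (S ∪ Z) c := by
  have i1 : c ex ∈ cs s t c x := Finset.mem_image_of_mem _ hx.inc_left
  have i2 : c ey ∈ cs s t c y := Finset.mem_image_of_mem _ hy.inc_left
  have i3 : c2 ex ∈ cs s t c2 p := Finset.mem_image_of_mem _ hx.inc_right
  have i4 : c2 ey ∈ cs s t c2 q := Finset.mem_image_of_mem _ hy.inc_right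
  have cc : ∀ {A : Finset C7} {a : C7}, a ∈ A → A.card = 3 → (A.erase a).card = 2 := by
    intro A a h1 h2
    rw [Finset.card_erase_of_mem h1, h2]
  obtain ⟨σ, s1, s2, s3, s4⟩ := glue_perm (c := c ex) (d := c ey) (α := c2 ex) (β := c2 ey)
    (P := (cs s t c x).erase (c ex)) (R := (cs s t c y).erase (c ey))
    (A := (cs s t c2 p).erase (c2 ex)) (B := (cs s t c2 q).erase (c2 ey)) hc1 hne
    (cc i1 (cs_card hC (hV.inj x hxS))) (cc i2 (cs_card hC (hV.inj y hyS)))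
    (cc i3 (hl p hp).2.card) (cc i4 (hl q hq).2.card) (by simp)
    (fun h => hc2 (Finset.mem_of_mem_erase h)) (by simp) (by simp) (by simp) hc3 (by
      rw [Finset.insert_erase i3, Finset.insert_erase i4]
      exact (hl p hp).2.union_card (hl q hq).2)
  have er : ∀ (A : Finset C7) (a : C7), (A.erase a).image σ = (A.image σ).erase (σ a) :=
    fun A a => Finset.image_erase σ.injective A a
  rw [er, s1] at s3
  rw [er, s2] at s4
  refine glue hd (hV.perm σ) (valid_lines hl) ?_
  intro e u v hJ hu hv
  rcases outS e u v hJ hu (Finset.disjoint_right.1 hd hv) with ⟨rfl, rfl, rfl⟩ | ⟨rfl, rfl, rfl⟩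
  · refine ⟨s1, ?_⟩
    rw [cs_perm]
    beta_reduce
    rw [s1]
    exact OK_of_erase (by rw [← s1]; exact Finset.mem_image_of_mem _ i1) i3 s3
  · refine ⟨s2, ?_⟩
    rw [cs_perm]
    beta_reduce
    rw [s2]
    exact OK_of_erase (by rw [← s2]; exact Finset.mem_image_of_mem _ i2) i4 s4

theorem rc [Fintype V] {s t : E → V} (hC : Cub s t) (X : Finset V) : ∃ c, Valid s t X c := by
  induction X using Finset.strongInduction with
  | H X ih =>
  by_cases h1 : ∃ T ⊂ X, T.Nonempty ∧ (betw s t T (X \ T)).card ≤ 1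
  · obtain ⟨T, hT, hne, hb⟩ := h1
    obtain ⟨c1, hc1⟩ := ih T hT
    obtain ⟨c2, hc2⟩ := ih (X \ T) (Finset.sdiff_ssubset hT.1 hne)
    have := glue1 hC Finset.disjoint_sdiff hc1 hc2 hb
    rwa [Finset.union_sdiff_of_subset hT.1] at this
  have h1' : ∀ T ⊂ X, T.Nonempty → 2 ≤ (dl s t T).card := by
    intro T hT hne
    by_contra h
    refine h1 ⟨T, hT, hne, ?_⟩
    have : betw s t T (X \ T) ⊆ dl s t T := by
      intro e he
      rw [mem_betw] at he
      rw [mem_dl]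
      simp only [Finset.mem_sdiff] at he
      tauto
    have := Finset.card_le_card this
    omega
  by_cases h2 : (dl s t X).card = 1
  swap
  · obtain ⟨c, hc, -⟩ := flow_color hC X (by
      intro T hT
      rcases T.eq_empty_or_nonempty with rfl | hne
      · simp [dl]
      by_cases hTX : T = X
      · rw [hTX]; exact h2
      · have := h1' T (lt_of_le_of_ne hT hTX) hne; omega)
    exact ⟨c, valid_lines hc⟩
  obtain ⟨π, hπ⟩ := Finset.card_eq_one.1 h2
  obtain ⟨v, v0, hvJ, hv, hv0⟩ := J_of_dl (show π ∈ dl s t X by rw [hπ]; simp)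
  have outX : ∀ e u w, J s t e u w → u ∈ X → w ∉ X → e = π ∧ u = v ∧ w = v0 := by
    intro e u w hJ hu hw
    have : e ∈ dl s t X := by rw [hJ.mem_dl_iff]; tauto
    rw [hπ] at this
    have : e = π := by simpa using this
    subst this
    rcases hvJ.uniq hJ with h | h
    · exact ⟨rfl, h⟩
    · exact absurd (h.1 ▸ hu) hv0
  -- the set X - v
  obtain ⟨a, b, hab, ha, hb, hi⟩ := inc_erase hC hvJ.inc_left
  have hcand : (X.erase v).Nonempty ∧ (X.erase v) ⊆ X.erase v ∧ (dl s t (X.erase v)).card ≤ 2 := by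
    refine ⟨?_, subset_rfl, ?_⟩
    · obtain ⟨w, hw⟩ := exists_J (show a ∈ inc s t v by rw [hi]; simp)
      refine ⟨w, ?_⟩
      rw [Finset.mem_erase]
      refine ⟨(hw.ne hC).symm, ?_⟩
      by_contra h
      exact ha (outX _ _ _ hw hv h).1
    · have : dl s t (X.erase v) ⊆ {a, b} := by
        intro e he
        obtain ⟨u, w, hJ, hu, hw⟩ := J_of_dl he
        simp only [Finset.mem_erase, not_and] at hu hw
        by_cases hwv : w = v
        · subst hwv
          have := hJ.inc_right
          rw [hi] at this
          simp only [Finset.mem_insert, Finset.mem_singleton] at this ⊢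
          rcases this with rfl | h | h
          · rcases hvJ.uniq hJ with h | h
            · exact absurd h.1 hu.1
            · exact absurd (h.1 ▸ hu.2) hv0
          · tauto
          · tauto
        · exact absurd (outX e u w hJ hu.2 (hw hwv)).2.1 hu.1
      exact (Finset.card_le_card this).trans Finset.card_le_two
  obtain ⟨S, ⟨hSne, hSv, hS2⟩, hSmin⟩ := Set.Finite.exists_minimal
    (Set.toFinite {S : Finset V | S.Nonempty ∧ S ⊆ X.erase v ∧ (dl s t S).card ≤ 2}) ⟨_, hcand⟩
  have hSX : S ⊂ X := lt_of_le_of_lt hSv (Finset.erase_ssubset hv)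
  have hmin : ∀ T ⊂ S, T.Nonempty → 3 ≤ (dl s t T).card := by
    intro T hT hne
    by_contra h
    exact hT.2 (hSmin (y := T) ⟨hne, hT.1.trans hSv, by omega⟩ hT.1)
  have hScard : (dl s t S).card = 2 := le_antisymm hS2 (h1' S hSX hSne)
  obtain ⟨ex, ey, hexy, hdl⟩ := Finset.card_eq_two.1 hScard
  obtain ⟨x, p, hx, hxS, hp⟩ := J_of_dl (show ex ∈ dl s t S by rw [hdl]; simp)
  obtain ⟨y, q, hy, hyS, hq⟩ := J_of_dl (show ey ∈ dl s t S by rw [hdl]; simp)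
  have outS : ∀ e u v, J s t e u v → u ∈ S → v ∉ S →
      (e = ex ∧ u = x ∧ v = p) ∨ (e = ey ∧ u = y ∧ v = q) := by
    intro e u w hJ hu hw
    have : e ∈ dl s t S := by rw [hJ.mem_dl_iff]; tauto
    rw [hdl] at this
    simp only [Finset.mem_insert, Finset.mem_singleton] at this
    rcases this with rfl | rfl
    · rcases hx.uniq hJ with h | h
      · exact Or.inl ⟨rfl, h⟩
      · exact absurd (h.1 ▸ hu) hp
    · rcases hy.uniq hJ with h | h
      · exact Or.inr ⟨rfl, h⟩
      · exact absurd (h.1 ▸ hu) hq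
  have inX : ∀ e u w, J s t e u w → u ∈ S → w ∈ X := by
    intro e u w hJ hu
    by_contra hw
    have := hSv hu
    rw [Finset.mem_erase] at this
    exact this.1 (outX e u w hJ this.2 hw).2.1
  have hpX : p ∈ X \ S := Finset.mem_sdiff.2 ⟨inX _ _ _ hx hxS, hp⟩
  have hqX : q ∈ X \ S := Finset.mem_sdiff.2 ⟨inX _ _ _ hy hyS, hq⟩
  obtain ⟨c, k1, k2, k3, k4⟩ := s_color hC hexy hxS hyS hp hq hx hy outS hmin
  obtain ⟨c2, l1, l2⟩ := flow_color hC (X \ S) (by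
    intro T hT
    rcases T.eq_empty_or_nonempty with rfl | hne
    · simp [dl]
    have := h1' T (lt_of_le_of_lt hT (Finset.sdiff_ssubset hSX.1 hSne)) hne
    omega)
  have hvS : v ∉ S := fun h => by simpa using hSv h
  have hvXS : v ∈ X \ S := Finset.mem_sdiff.2 ⟨hv, hvS⟩
  have hπx : ex ≠ π := by
    rintro rfl
    rcases hvJ.uniq hx with h | h
    · exact hvS (h.1 ▸ hxS)
    · exact hv0 (h.1 ▸ hSX.1 hxS)
  have hπy : ey ≠ π := by
    rintro rfl
    rcases hvJ.uniq hy with h | h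
    · exact hvS (h.1 ▸ hyS)
    · exact hv0 (h.1 ▸ hSX.1 hyS)
  have hdl2 : dl s t (X \ S) = {ex, ey, π} := by
    ext e
    simp only [Finset.mem_insert, Finset.mem_singleton]
    constructor
    · intro he
      obtain ⟨u, w, hJ, hu, hw⟩ := J_of_dl he
      simp only [Finset.mem_sdiff, not_and, not_not] at hu hw
      by_cases hwX : w ∈ X
      · rcases outS e w u hJ.symm (hw hwX) hu.2 with h | h
        · exact Or.inl h.1
        · exact Or.inr (Or.inl h.1)
      · exact Or.inr (Or.inr (outX e u w hJ hu.1 hwX).1)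
    · rintro (rfl | rfl | rfl)
      · rw [hx.mem_dl_iff]; simp only [hpX, Finset.mem_sdiff, hxS]; simp
      · rw [hy.mem_dl_iff]; simp only [hqX, Finset.mem_sdiff, hyS]; simp
      · rw [hvJ.mem_dl_iff]; simp only [hvXS, Finset.mem_sdiff, hv0]; simp
  have hne : c2 ex ≠ c2 ey := by
    intro h
    rw [hdl2, Finset.sum_insert (by simp [hexy, hπx]), Finset.sum_pair hπy, h, ← add_assoc, A8_two,
      zero_add] at l2
    exact (c2 π).2 l2
  have := glue2 hC Finset.disjoint_sdiff hxS hyS hpX hqX hx hy outS k1 k2 k3 k4 l1 hne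
  rwa [Finset.union_sdiff_of_subset hSX.1] at this
end rc
end NC

namespace NC

theorem card_upper {V : Type*} [Fintype V] (G : SimpleGraph V) (hG : IsCubic G) :
    ∃ c : Sym2 V → Fin 7, IsNormalEdgeColoring G c := by
  classical
  let E := {e : Sym2 V // e ∈ G.edgeSet}
  have : Fintype E := Fintype.ofFinite E
  let s : E → V := fun e => (Quot.out e.1).1
  let t : E → V := fun e => (Quot.out e.1).2
  have hst : ∀ e : E, e.1 = s(s e, t e) := fun e => (Quot.out_eq e.1).symm
  have hJ : ∀ (e : E) u v, J s t e u v ↔ e.1 = s(u, v) := by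
    intro e u v
    rw [hst e, Sym2.eq_iff]; rfl
  have hinc : ∀ (e : E) v, e ∈ inc s t v ↔ v ∈ e.1 := by
    intro e v
    rw [hst e, Sym2.mem_iff, mem_inc, eq_comm, @eq_comm _ (t e)]
  have hC : Cub s t := by
    refine ⟨?_, ?_, ?_⟩
    · intro e h
      have h1 := e.2
      rw [hst e, SimpleGraph.mem_edgeSet] at h1
      exact h1.ne h
    · intro e e' u v h1 h2
      rw [hJ] at h1 h2
      exact Subtype.ext (h1.trans h2.symm)
    · intro v
      have h1 : ((inc s t v).map (Function.Embedding.subtype _) : Set (Sym2 V)) = G.incidenceSet v := by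
        ext e
        simp only [Finset.coe_map, Set.mem_image, Finset.mem_coe, hinc]
        constructor
        · rintro ⟨e, h, rfl⟩; exact ⟨e.2, h⟩
        · rintro ⟨h, h'⟩; exact ⟨⟨e, h⟩, h', rfl⟩
      have h2 : (G.incidenceSet v).ncard = 3 := by
        rw [← hG v, ← Nat.card_coe_set_eq, ← Nat.card_coe_set_eq]
        exact Nat.card_congr (G.incidenceSetEquivNeighborSet v)
      rw [← h1, Set.ncard_coe_finset, Finset.card_map] at h2
      exact h2
  obtain ⟨c, hc⟩ := rc hC Finset.univ
  let φ : C7 ≃ Fin 7 := Fintype.equivFinOfCardEq C7_card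
  let c' : Sym2 V → Fin 7 := fun e => if h : e ∈ G.edgeSet then φ (c ⟨e, h⟩) else 0
  have hc' : ∀ e : E, c' e.1 = φ (c e) := fun e => by simp only [c']; rw [dif_pos e.2]
  have hcs : ∀ v, colorSet G c' v = ((cs s t c v).image φ : Set (Fin 7)) := by
    intro v
    ext k
    simp only [colorSet, cs, Finset.coe_image, Set.mem_image, Finset.mem_coe, hinc]
    constructor
    · rintro ⟨e, he, rfl⟩
      exact ⟨c ⟨e, he.1⟩, ⟨⟨e, he.1⟩, he.2, rfl⟩, (hc' ⟨e, he.1⟩).symm⟩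
    · rintro ⟨_, ⟨e, he, rfl⟩, rfl⟩
      exact ⟨e.1, ⟨e.2, he⟩, hc' e⟩
  refine ⟨c', ?_, ?_⟩
  · rintro e he f hf hne ⟨v, hve, hvf⟩ heq
    rw [hc' ⟨e, he⟩, hc' ⟨f, hf⟩] at heq
    have := hc.inj v (Finset.mem_univ _) ((hinc ⟨e, he⟩ v).2 hve) ((hinc ⟨f, hf⟩ v).2 hvf) (φ.injective heq)
    exact hne (congrArg Subtype.val this)
  · intro u v huv
    have hok := hc.ok ⟨s(u, v), huv⟩ u v ((hJ _ _ _).2 rfl) (Finset.mem_univ _) (Finset.mem_univ _)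
    have c1 := cs_card hC (hc.inj u (Finset.mem_univ _))
    have c2 := cs_card hC (hc.inj v (Finset.mem_univ _))
    have key : (colorSet G c' u ∪ colorSet G c' v).ncard = (cs s t c u ∪ cs s t c v).card := by
      rw [hcs, hcs, ← Finset.coe_union, ← Finset.image_union, Set.ncard_coe_finset,
        Finset.card_image_of_injective _ φ.injective]
    rcases hok with h | h
    · left
      unfold IsPoorAt
      rw [key, h, Finset.union_self, c2]
    · right
      unfold IsRichAt
      rw [key]
      have := Finset.card_union_add_card_inter (cs s t c u) (cs s t c v)
      rw [h, Finset.card_singleton, c1, c2] at this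
      omega

theorem colorSet3 {V C : Type*} [Fintype V] {G : SimpleGraph V} (hG : IsCubic G) (c : Sym2 V → C)
    {v a b d : V} (ha : G.Adj v a) (hb : G.Adj v b) (hd : G.Adj v d) (hab : a ≠ b) (had : a ≠ d)
    (hbd : b ≠ d) : colorSet G c v = {c s(v, a), c s(v, b), c s(v, d)} := by
  have hn : ({a, b, d} : Set V) = G.neighborSet v := by
    apply Set.eq_of_subset_of_ncard_le
    · intro x hx
      rcases hx with rfl | rfl | rfl <;> assumption
    · rw [hG v, Set.ncard_eq_three.2 ⟨a, b, d, hab, had, hbd, rfl⟩]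
    · exact Set.toFinite _
  ext k
  simp only [colorSet, Set.mem_image, Set.mem_insert_iff, Set.mem_singleton_iff]
  constructor
  · rintro ⟨e, ⟨he, hv⟩, rfl⟩
    obtain ⟨w, rfl⟩ := Sym2.mem_iff_exists.1 hv
    have : w ∈ G.neighborSet v := he
    rw [← hn] at this
    rcases this with rfl | rfl | rfl <;> simp
  · rintro (rfl | rfl | rfl)
    · exact ⟨_, ⟨ha, by simp⟩, rfl⟩
    · exact ⟨_, ⟨hb, by simp⟩, rfl⟩
    · exact ⟨_, ⟨hd, by simp⟩, rfl⟩

theorem prop_ne {V C : Type*} {G : SimpleGraph V} {c : Sym2 V → C} (h : IsProperEdgeColoring G c)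
    {v a b : V} (ha : G.Adj v a) (hb : G.Adj v b) (hab : a ≠ b) : c s(v, a) ≠ c s(v, b) := by
  refine h _ ha _ hb ?_ ⟨v, by simp, by simp⟩
  intro h
  rw [Sym2.eq_iff] at h
  rcases h with h | h
  · exact hab h.2
  · exact hab (h.2.trans h.1)

theorem edge_lem {V C : Type*} [Fintype V] {G : SimpleGraph V} (hG : IsCubic G) {c : Sym2 V → C}
    (h : IsNormalEdgeColoring G c) {u v a b a' b' : V} (huv : G.Adj u v) (ha : G.Adj u a)
    (hb : G.Adj u b) (ha' : G.Adj v a') (hb' : G.Adj v b') (hab : a ≠ b) (hab' : a' ≠ b')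
    (hva : v ≠ a) (hvb : v ≠ b) (hua : u ≠ a') (hub : u ≠ b') :
    (c s(u, a) = c s(v, a') ∧ c s(u, b) = c s(v, b')) ∨
    (c s(u, a) = c s(v, b') ∧ c s(u, b) = c s(v, a')) ∨
    (c s(u, a) ≠ c s(v, a') ∧ c s(u, b) ≠ c s(v, b') ∧ c s(u, a) ≠ c s(v, b') ∧
      c s(u, b) ≠ c s(v, a')) := by
  classical
  have n1 := prop_ne h.1 huv ha hva
  have n2 := prop_ne h.1 huv hb hvb
  have n3 := prop_ne h.1 ha hb hab
  have n4 := prop_ne h.1 huv.symm ha' hua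
  have n5 := prop_ne h.1 huv.symm hb' hub
  have n6 := prop_ne h.1 ha' hb' hab'
  have s1 := colorSet3 hG c huv ha hb hva hvb hab
  have s2 := colorSet3 hG c huv.symm ha' hb' hua hub hab'
  have hsw : s(v, u) = s(u, v) := Sym2.eq_swap
  rw [hsw] at s2 n4 n5
  have key : ∀ k p q p' q' : C, k ≠ p → k ≠ q → p ≠ q → k ≠ p' → k ≠ q' → p' ≠ q' →
      (({k, p, q} : Set C) ∪ {k, p', q'}).ncard = 3 ∨ (({k, p, q} : Set C) ∪ {k, p', q'}).ncard = 5 →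
      p = p' → q ≠ q' → False := by
    rintro k p q p' q' h1 h2 h3 h4 h5 h6 hn rfl hq
    have e : (({k, p, q} : Set C) ∪ {k, p, q'}) = (({k, p, q, q'} : Finset C) : Set C) := by
      ext x; simp; tauto
    rw [e, Set.ncard_coe_finset, Finset.card_insert_of_notMem (by simp; tauto),
      Finset.card_insert_of_notMem (by simp; tauto), Finset.card_pair hq] at hn
    omega
  have hn := h.2 u v huv
  unfold IsPoorAt IsRichAt at hn
  rw [s1, s2] at hn
  generalize c s(u, v) = k at *
  generalize c s(u, a) = p at *
  generalize c s(u, b) = q at *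
  generalize c s(v, a') = p' at *
  generalize c s(v, b') = q' at *
  have k1 := key k p q p' q' n1 n2 n3 n4 n5 n6 hn
  have k2 := key k p q q' p' n1 n2 n3 n5 n4 n6.symm (by
    rwa [Set.pair_comm q' p'])
  have k3 := key k q p p' q' n2 n1 n3.symm n4 n5 n6 (by rwa [Set.pair_comm q p])
  have k4 := key k q p q' p' n2 n1 n3.symm n5 n4 n6.symm (by
    rwa [Set.pair_comm q p, Set.pair_comm q' p'])
  clear * - k1 k2 k3 k4 n3 n6
  by_cases x1 : p = p' <;> by_cases x2 : p = q' <;> by_cases x3 : q = p' <;> by_cases x4 : q = q' <;>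
    simp_all

theorem lower {V : Type*} [Fintype V] (G : SimpleGraph V) (hG : IsCubic G)
    (v₁ v₂ v₃ v₄ v₅ : V) (hdist : ([v₁, v₂, v₃, v₄, v₅] : List V).Nodup)
    (h12 : G.Adj v₁ v₂) (h13 : G.Adj v₁ v₃) (h24 : G.Adj v₂ v₄) (h25 : G.Adj v₂ v₅)
    (h34 : G.Adj v₃ v₄) (h35 : G.Adj v₃ v₅) (h45 : G.Adj v₄ v₅)
    (c : Sym2 V → Fin 6) (h : IsNormalEdgeColoring G c) : False := by
  simp only [List.nodup_cons, List.mem_cons, List.not_mem_nil, or_false, not_or, not_false_eq_true,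
    List.nodup_nil, and_true] at hdist
  obtain ⟨⟨d12, d13, d14, d15⟩, ⟨d23, d24, d25⟩, ⟨d34, d35⟩, d45⟩ := hdist
  have E45 := edge_lem hG h h45 h24.symm h34.symm h25.symm h35.symm d23 d23 (Ne.symm d25)
    (Ne.symm d35) (Ne.symm d24) (Ne.symm d34)
  have E24 := edge_lem hG h h24 h12.symm h25 h34.symm h45 d15 d35 (Ne.symm d14) d45 d23 d25
  have E25 := edge_lem hG h h25 h12.symm h24 h35.symm h45.symm d14 d34 (Ne.symm d15) (Ne.symm d45) d23 d24
  have E34 := edge_lem hG h h34 h13.symm h35 h24.symm h45 d15 d25 (Ne.symm d14) d45 (Ne.symm d23) d35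
  have E35 := edge_lem hG h h35 h13.symm h34 h25.symm h45.symm d14 d24 (Ne.symm d15) (Ne.symm d45) (Ne.symm d23) d34
  have P := @prop_ne _ _ _ _ h.1
  have n1 := P h12 h13 d23
  have n2 := P h24 h25 d45
  have n3 := P h34 h35 d45
  have n4 := P h24 h12.symm (Ne.symm d14)
  have n5 := P h25 h12.symm (Ne.symm d15)
  have n6 := P h34 h13.symm (Ne.symm d14)
  have n7 := P h35 h13.symm (Ne.symm d15)
  have n8 := P h45 h24.symm (Ne.symm d25)
  have n9 := P h45 h34.symm (Ne.symm d35)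
  have n10 := P h45.symm h25.symm (Ne.symm d24)
  have n11 := P h45.symm h35.symm (Ne.symm d34)
  have n12 := P h24.symm h34.symm d23
  have n13 := P h25.symm h35.symm d23
  simp only [(Sym2.eq_swap : s(v₂, v₁) = s(v₁, v₂)),
    (Sym2.eq_swap : s(v₃, v₁) = s(v₁, v₃)),
    (Sym2.eq_swap : s(v₄, v₂) = s(v₂, v₄)),
    (Sym2.eq_swap : s(v₄, v₃) = s(v₃, v₄)),
    (Sym2.eq_swap : s(v₅, v₂) = s(v₂, v₅)),
    (Sym2.eq_swap : s(v₅, v₃) = s(v₃, v₅)),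
    (Sym2.eq_swap : s(v₅, v₄) = s(v₄, v₅))]
    at E45 E24 E25 E34 E35 n1 n2 n3 n4 n5 n6 n7 n8 n9 n10 n11 n12 n13
  generalize c s(v₁, v₂) = a at *
  generalize c s(v₁, v₃) = b at *
  generalize c s(v₂, v₄) = p at *
  generalize c s(v₂, v₅) = q at *
  generalize c s(v₃, v₄) = r at *
  generalize c s(v₃, v₅) = w at *
  generalize c s(v₄, v₅) = m at *
  clear * - E45 E24 E25 E34 E35 n1 n2 n3 n4 n5 n6 n7 n8 n9 n10 n11 n12 n13
  have : [a, b, p, q, r, w, m].Nodup := by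
    simp only [List.nodup_cons, List.mem_cons, List.not_mem_nil, or_false, not_or, not_false_eq_true,
      List.nodup_nil, and_true]
    grind
  have := this.length_le_card
  simp at this
end NC

theorem stmt_16 {V : Type*} [Fintype V] (G : SimpleGraph V) (hG : IsCubic G)
    (v₁ v₂ v₃ v₄ v₅ : V) (hdist : ([v₁, v₂, v₃, v₄, v₅] : List V).Nodup)
    (h12 : G.Adj v₁ v₂) (h13 : G.Adj v₁ v₃) (h24 : G.Adj v₂ v₄) (h25 : G.Adj v₂ v₅)
    (h34 : G.Adj v₃ v₄) (h35 : G.Adj v₃ v₅) (h45 : G.Adj v₄ v₅) :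
    (∃ c : Sym2 V → Fin 7, IsNormalEdgeColoring G c) ∧
      ∀ c : Sym2 V → Fin 6, ¬ IsNormalEdgeColoring G c := by
  exact ⟨NC.card_upper G hG, fun c h => NC.lower G hG v₁ v₂ v₃ v₄ v₅ hdist h12 h13 h24 h25 h34 h35 h45 c h⟩
end

section
/- The complete bipartite graph K_{3,3} does not admit a nowhere-zero Z_2^3-flow such that the three edges incident to some vertex are all rich: for every nowhere-zero Z_2^3-flow θ on K_{3,3} and every vertex v of K_{3,3}, it is not the case that all three edges incident to v are rich with respect to θ. -/
set_option maxRecDepth 100000 in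
set_option synthInstance.maxHeartbeats 2000000 in
set_option synthInstance.maxSize 100000 in
set_option maxHeartbeats 2000000 in
theorem aux_decide : ∀ a b p q : ZMod 2 × ZMod 2 × ZMod 2, a ≠ 0 → b ≠ 0 → a ≠ b →
    p ≠ 0 → p ≠ a → p ≠ b → p ≠ a + b → q ≠ 0 → q ≠ a → q ≠ b → q ≠ a + b →
    p + q = 0 ∨ p + q = a ∨ p + q = b ∨ p + q = a + b := by
  decide +kernel

theorem aux_neg : ∀ x : ZMod 2 × ZMod 2 × ZMod 2, -x = x := by decide

theorem aux_third (a b c : ZMod 2 × ZMod 2 × ZMod 2) (h : a + b + c = 0) : c = a + b := by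
  rw [← aux_neg c]; exact (eq_neg_of_add_eq_zero_left h).symm

theorem aux_card {M : Type*} (g h : Fin 3 → M) (i j k : Fin 3) (hk : k ≠ i) (e : g j = h i)
    (hc : (Set.range g ∪ Set.range h).ncard = 5) (l : Fin 3) : h k ≠ g l := by
  classical
  intro hkl
  obtain ⟨m, hm⟩ : ∃ m : Fin 3, ∀ x, x = i ∨ x = k ∨ x = m := by
    clear e hkl; revert i k; decide
  have hs : Set.range g ∪ Set.range h ⊆
      (((Finset.univ.image g) ∪ {h m} : Finset M) : Set M) := by
    rintro x (⟨y, rfl⟩ | ⟨y, rfl⟩)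
    · simp
    · rcases hm y with rfl | rfl | rfl
      · simp [← e]
      · simp [hkl]
      · simp
  have h1 := Set.ncard_le_ncard hs (Finset.finite_toSet _)
  rw [Set.ncard_coe_finset, hc] at h1
  have h2 := Finset.card_union_le (Finset.univ.image g) {h m}
  have h3 : (Finset.univ.image g).card ≤ 3 := by
    simpa using Finset.card_image_le (s := (Finset.univ : Finset (Fin 3))) (f := g)
  simp only [Finset.card_singleton] at h2
  omega

theorem aux_main (f : Fin 3 → Fin 3 → ZMod 2 × ZMod 2 × ZMod 2) (h0 : ∀ i j, f i j ≠ 0)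
    (hr : ∀ i, f i 0 + f i 1 + f i 2 = 0) (i : Fin 3)
    (hc : ∀ j, (Set.range (f i) ∪ Set.range (fun k => f k j)).ncard = 5) : False := by
  obtain ⟨k, hk⟩ : ∃ k : Fin 3, k ≠ i := by clear hc; revert i; decide
  have key : ∀ j l, f k j ≠ f i l := fun j l =>
    aux_card (f i) (fun k => f k j) i j k hk rfl (hc j) l
  have h3 := aux_third _ _ _ (hr i)
  have h4 := aux_third _ _ _ (hr k)
  have hab : f i 0 ≠ f i 1 := by
    intro h
    apply h0 i 2
    rw [h3, h, ← aux_neg (f i 1), aux_neg (f i 1)]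
    nth_rewrite 1 [← aux_neg (f i 1)]
    simp
  have := aux_decide (f i 0) (f i 1) (f k 0) (f k 1) (h0 _ _) (h0 _ _) hab
    (h0 _ _) (key _ _) (key _ _) (h3 ▸ key 0 2) (h0 _ _) (key _ _) (key _ _) (h3 ▸ key 1 2)
  rw [← h3, ← h4] at this
  rcases this with h | h | h | h
  · exact h0 _ _ h
  all_goals exact key _ _ h

theorem aux_incl (i : Fin 3) : (completeBipartiteGraph (Fin 3) (Fin 3)).incidenceSet (Sum.inl i) =
    Set.range (fun j : Fin 3 => s(Sum.inl i, Sum.inr j)) := by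
  ext e
  induction e using Sym2.ind with
  | _ x y =>
    rcases x with x | x <;> rcases y with y | y <;>
      simp [SimpleGraph.incidenceSet, eq_comm]

theorem aux_incr (i : Fin 3) : (completeBipartiteGraph (Fin 3) (Fin 3)).incidenceSet (Sum.inr i) =
    Set.range (fun j : Fin 3 => s(Sum.inl j, Sum.inr i)) := by
  ext e
  induction e using Sym2.ind with
  | _ x y =>
    rcases x with x | x <;> rcases y with y | y <;>
      simp [SimpleGraph.incidenceSet, eq_comm]

open SimpleGraph

theorem stmt_17 (θ : Sym2 (Fin 3 ⊕ Fin 3) → ZMod 2 × ZMod 2 × ZMod 2)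
    (hθ : IsNowhereZeroFlow (completeBipartiteGraph (Fin 3) (Fin 3)) θ)
    (v : Fin 3 ⊕ Fin 3) :
    ¬ ∀ x : Fin 3 ⊕ Fin 3, (completeBipartiteGraph (Fin 3) (Fin 3)).Adj v x →
        IsRichAt (completeBipartiteGraph (Fin 3) (Fin 3)) θ v x := by
  intro H
  obtain ⟨h0, hs⟩ := hθ
  have hn : ∀ i j : Fin 3, θ s(Sum.inl i, Sum.inr j) ≠ 0 := fun i j => h0 _ (by simp)
  rcases v with i | i
  · refine aux_main (fun i j => θ s(Sum.inl i, Sum.inr j)) hn (fun i => ?_) i (fun j => ?_)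
    · have := hs (Sum.inl i)
      rw [aux_incl, finsum_mem_range (fun a b h => by simpa using h), finsum_eq_sum_of_fintype,
        Fin.sum_univ_three] at this
      exact this
    · have := H (Sum.inr j) (by simp)
      rw [IsRichAt, colorSet, colorSet, aux_incl, aux_incr, ← Set.range_comp, ← Set.range_comp]
        at this
      exact this
  · refine aux_main (fun i j => θ s(Sum.inl j, Sum.inr i)) (fun i j => hn j i) (fun i => ?_) i
      (fun j => ?_)
    · have := hs (Sum.inr i)
      rw [aux_incr, finsum_mem_range (fun a b h => by simpa using h), finsum_eq_sum_of_fintype,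
        Fin.sum_univ_three] at this
      exact this
    · have := H (Sum.inl j) (by simp)
      rw [IsRichAt, colorSet, colorSet, aux_incl, aux_incr, ← Set.range_comp, ← Set.range_comp]
        at this
      exact this
end

section
/- Let G10 be the simple graph on vertices v0, v1, ..., v9 with edge set {v0v1, v0v5, v0v6, v1v2, v1v5, v2v3, v2v7, v3v4, v3v9, v4v8, v4v9, v5v6, v6v7, v7v8, v8v9} (a cubic graph on 10 vertices). Then in every normal 6-edge-coloring of G10, the edge v2v7 is poor. -/
open SimpleGraph

/-- The cubic graph on 10 vertices of Figure 5 of the paper. -/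
def G10 : SimpleGraph (Fin 10) :=
  SimpleGraph.fromEdgeSet
    {s(0, 1), s(0, 5), s(0, 6), s(1, 2), s(1, 5), s(2, 3), s(2, 7), s(3, 4), s(3, 9),
      s(4, 8), s(4, 9), s(5, 6), s(6, 7), s(7, 8), s(8, 9)}


lemma mem_G10 (e : Sym2 (Fin 10)) : e ∈ G10.edgeSet ↔
    e ∈ ({s(0, 1), s(0, 5), s(0, 6), s(1, 2), s(1, 5), s(2, 3), s(2, 7), s(3, 4), s(3, 9),
      s(4, 8), s(4, 9), s(5, 6), s(6, 7), s(7, 8), s(8, 9)} : Finset (Sym2 (Fin 10))) := by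
  unfold G10
  rw [edgeSet_fromEdgeSet]
  simp only [Set.mem_sdiff, Set.mem_insert_iff, Set.mem_singleton_iff, Finset.mem_insert,
    Finset.mem_singleton]
  constructor
  · exact fun h => h.1
  · intro h
    refine ⟨h, ?_⟩
    rcases h with h | h | h | h | h | h | h | h | h | h | h | h | h | h | h <;> subst h <;>
      simp

lemma inc_G10 (v : Fin 10) (s : Finset (Sym2 (Fin 10)))
    (h : s = ({s(0, 1), s(0, 5), s(0, 6), s(1, 2), s(1, 5), s(2, 3), s(2, 7), s(3, 4), s(3, 9),
      s(4, 8), s(4, 9), s(5, 6), s(6, 7), s(7, 8), s(8, 9)} : Finset (Sym2 (Fin 10))).filter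
        (fun e => v ∈ e)) : G10.incidenceSet v = s := by
  ext e
  rw [h, Finset.mem_coe, Finset.mem_filter, ← mem_G10]
  rfl

lemma edge_cases (m p q r s : Fin 6) (hp : m ≠ p) (hq : m ≠ q) (hr : m ≠ r) (hs : m ≠ s)
    (hpq : p ≠ q) (hrs : r ≠ s)
    (h : (({m, p, q} : Finset (Fin 6)) ∪ {m, r, s}).card = 3 ∨
      (({m, p, q} : Finset (Fin 6)) ∪ {m, r, s}).card = 5) :
    (p = r ∧ q = s) ∨ (p = s ∧ q = r) ∨ (p ≠ r ∧ p ≠ s ∧ q ≠ r ∧ q ≠ s) := by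
  have e : ({m, p, q} : Finset (Fin 6)) ∪ {m, r, s} = {m, p, q, r, s} := by
    ext; simp only [Finset.mem_union, Finset.mem_insert, Finset.mem_singleton]; tauto
  rw [e] at h
  by_cases h1 : p = r <;> by_cases h2 : p = s <;> by_cases h3 : q = r <;> by_cases h4 : q = s <;>
    grind

lemma seven (a b d e f x y : Fin 6) (h : [a, b, d, e, f, x, y].Nodup) : False := by
  have := h.length_le_card
  simp at this

/-- Let `a=01, b=15, d=05, e=06, f=56, x=12, y=67`. -/
lemma half (a b d e f x y : Fin 6) (ad : a ≠ d) (ae : a ≠ e) (de : d ≠ e) (ab : a ≠ b)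
    (ax : a ≠ x) (bx : b ≠ x) (bd : b ≠ d) (bf : b ≠ f) (df : d ≠ f) (ef : e ≠ f) (ey : e ≠ y)
    (fy : f ≠ y)
    (h05 : (a = b ∧ e = f) ∨ (a = f ∧ e = b) ∨ (a ≠ b ∧ a ≠ f ∧ e ≠ b ∧ e ≠ f))
    (h01 : (d = b ∧ e = x) ∨ (d = x ∧ e = b) ∨ (d ≠ b ∧ d ≠ x ∧ e ≠ b ∧ e ≠ x))
    (h15 : (a = d ∧ x = f) ∨ (a = f ∧ x = d) ∨ (a ≠ d ∧ a ≠ f ∧ x ≠ d ∧ x ≠ f))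
    (h06 : (a = f ∧ d = y) ∨ (a = y ∧ d = f) ∨ (a ≠ f ∧ a ≠ y ∧ d ≠ f ∧ d ≠ y))
    (h56 : (b = e ∧ d = y) ∨ (b = y ∧ d = e) ∨ (b ≠ e ∧ b ≠ y ∧ d ≠ e ∧ d ≠ y)) : x = y := by
  by_contra hxy
  apply seven a b d e f x y
  simp only [List.nodup_cons, List.mem_cons, List.not_mem_nil, not_or, or_false]
  grind

theorem stmt_18 (c : Sym2 (Fin 10) → Fin 6) (hc : IsNormalEdgeColoring G10 c) :
    IsPoorAt G10 c 2 7 := by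
  obtain ⟨hp, hn⟩ := hc
  have P : ∀ v x y : Fin 10, s(v, x) ∈ G10.edgeSet → s(v, y) ∈ G10.edgeSet → x ≠ y →
      c s(v, x) ≠ c s(v, y) := by
    intro v x y h1 h2 h3
    exact hp _ h1 _ h2 (fun h => h3 (Sym2.congr_right.1 h)) ⟨v, by simp, by simp⟩
  have Q : ∀ u v p q r s : Fin 10,
      (G10.incidenceSet u = (({s(u, v), s(u, p), s(u, q)} : Finset (Sym2 (Fin 10))) : Set _)) →
      (G10.incidenceSet v = (({s(v, u), s(v, r), s(v, s)} : Finset (Sym2 (Fin 10))) : Set _)) →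
      colorSet G10 c u ∪ colorSet G10 c v =
        ((({c s(u, v), c s(u, p), c s(u, q)} : Finset (Fin 6)) ∪
          {c s(u, v), c s(v, r), c s(v, s)} : Finset (Fin 6)) : Set (Fin 6)) := by
    intro u v p q r s h1 h2
    unfold colorSet
    rw [h1, h2, Sym2.eq_swap (a := v) (b := u)]
    push_cast
    simp only [Set.image_insert_eq, Set.image_singleton]
  have R : ∀ u v p q r s : Fin 10,
      ({s(u, v), s(u, p), s(u, q)} : Finset (Sym2 (Fin 10))) = ({s(0, 1), s(0, 5), s(0, 6), s(1, 2), s(1, 5), s(2, 3), s(2, 7), s(3, 4), s(3, 9),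
      s(4, 8), s(4, 9), s(5, 6), s(6, 7), s(7, 8), s(8, 9)} : Finset (Sym2 (Fin 10))).filter
        (fun e => u ∈ e) →
      ({s(v, u), s(v, r), s(v, s)} : Finset (Sym2 (Fin 10))) = ({s(0, 1), s(0, 5), s(0, 6), s(1, 2), s(1, 5), s(2, 3), s(2, 7), s(3, 4), s(3, 9),
      s(4, 8), s(4, 9), s(5, 6), s(6, 7), s(7, 8), s(8, 9)} : Finset (Sym2 (Fin 10))).filter
        (fun e => v ∈ e) →
      (v ≠ p ∧ v ≠ q ∧ u ≠ r ∧ u ≠ s ∧ p ≠ q ∧ r ≠ s) →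
      (c s(u, p) = c s(v, r) ∧ c s(u, q) = c s(v, s)) ∨
      (c s(u, p) = c s(v, s) ∧ c s(u, q) = c s(v, r)) ∨
      (c s(u, p) ≠ c s(v, r) ∧ c s(u, p) ≠ c s(v, s) ∧ c s(u, q) ≠ c s(v, r) ∧
        c s(u, q) ≠ c s(v, s)) := by
    intro u v p q r s h1 h2 ⟨n1, n2, n3, n4, n5, n6⟩
    have i1 := inc_G10 _ _ h1
    have i2 := inc_G10 _ _ h2
    have M : ∀ w e, e ∈ G10.incidenceSet w → e ∈ G10.edgeSet := fun w e h => h.1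
    have a1 : s(u, v) ∈ G10.edgeSet := M u _ (by rw [i1]; simp)
    have a2 : s(u, p) ∈ G10.edgeSet := M u _ (by rw [i1]; simp)
    have a3 : s(u, q) ∈ G10.edgeSet := M u _ (by rw [i1]; simp)
    have b1 : s(v, u) ∈ G10.edgeSet := M v _ (by rw [i2]; simp)
    have b2 : s(v, r) ∈ G10.edgeSet := M v _ (by rw [i2]; simp)
    have b3 : s(v, s) ∈ G10.edgeSet := M v _ (by rw [i2]; simp)
    have hh := hn u v a1
    unfold IsPoorAt IsRichAt at hh
    rw [Q u v p q r s i1 i2, Set.ncard_coe_finset] at hh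
    refine edge_cases (c s(u, v)) _ _ _ _ (P _ _ _ a1 a2 n1) (P _ _ _ a1 a3 n2) ?_ ?_
      (P _ _ _ a2 a3 n5) (P _ _ _ b2 b3 n6) hh
    · rw [Sym2.eq_swap]; exact P _ _ _ b1 b2 n3
    · rw [Sym2.eq_swap]; exact P _ _ _ b1 b3 n4
  have E : ∀ v x y : Fin 10, s(v, x) ∈ ({s(0, 1), s(0, 5), s(0, 6), s(1, 2), s(1, 5), s(2, 3), s(2, 7), s(3, 4), s(3, 9),
      s(4, 8), s(4, 9), s(5, 6), s(6, 7), s(7, 8), s(8, 9)} : Finset (Sym2 (Fin 10))) ∧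
      s(v, y) ∈ ({s(0, 1), s(0, 5), s(0, 6), s(1, 2), s(1, 5), s(2, 3), s(2, 7), s(3, 4), s(3, 9),
      s(4, 8), s(4, 9), s(5, 6), s(6, 7), s(7, 8), s(8, 9)} : Finset (Sym2 (Fin 10))) ∧ x ≠ y →
      c s(v, x) ≠ c s(v, y) := fun v x y h =>
    P v x y ((mem_G10 _).2 h.1) ((mem_G10 _).2 h.2.1) h.2.2
  have sw : ∀ x y : Fin 10, c s(x, y) = c s(y, x) := fun x y => by rw [Sym2.eq_swap]
  have h1 : c s(1, 2) = c s(6, 7) := by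
    apply half (c s(0, 1)) (c s(1, 5)) (c s(0, 5)) (c s(0, 6)) (c s(5, 6))
    · exact E 0 1 5 (by decide)
    · exact E 0 1 6 (by decide)
    · exact E 0 5 6 (by decide)
    · rw [sw 0 1]; exact E 1 0 5 (by decide)
    · rw [sw 0 1]; exact E 1 0 2 (by decide)
    · exact E 1 5 2 (by decide)
    · rw [sw 1 5, sw 0 5]; exact E 5 1 0 (by decide)
    · rw [sw 1 5]; exact E 5 1 6 (by decide)
    · rw [sw 0 5]; exact E 5 0 6 (by decide)
    · rw [sw 0 6, sw 5 6]; exact E 6 0 5 (by decide)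
    · rw [sw 0 6]; exact E 6 0 7 (by decide)
    · rw [sw 5 6]; exact E 6 5 7 (by decide)
    · rw [sw 1 5]; exact R 0 5 1 6 1 6 (by decide) (by decide) (by decide)
    · exact R 0 1 5 6 5 2 (by decide) (by decide) (by decide)
    · rw [sw 0 1, sw 0 5]; exact R 1 5 0 2 0 6 (by decide) (by decide) (by decide)
    · rw [sw 5 6]; exact R 0 6 1 5 5 7 (by decide) (by decide) (by decide)
    · rw [sw 1 5, sw 0 5, sw 0 6]; exact R 5 6 1 0 0 7 (by decide) (by decide) (by decide)
  -- 0,1,5,6,2,7 become 4,3,9,8,2,7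
  have h2 : c s(3, 2) = c s(8, 7) := by
    apply half (c s(4, 3)) (c s(3, 9)) (c s(4, 9)) (c s(4, 8)) (c s(9, 8))
    · exact E 4 3 9 (by decide)
    · exact E 4 3 8 (by decide)
    · exact E 4 9 8 (by decide)
    · rw [sw 4 3]; exact E 3 4 9 (by decide)
    · rw [sw 4 3]; exact E 3 4 2 (by decide)
    · exact E 3 9 2 (by decide)
    · rw [sw 3 9, sw 4 9]; exact E 9 3 4 (by decide)
    · rw [sw 3 9]; exact E 9 3 8 (by decide)
    · rw [sw 4 9]; exact E 9 4 8 (by decide)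
    · rw [sw 4 8, sw 9 8]; exact E 8 4 9 (by decide)
    · rw [sw 4 8]; exact E 8 4 7 (by decide)
    · rw [sw 9 8]; exact E 8 9 7 (by decide)
    · rw [sw 3 9]; exact R 4 9 3 8 3 8 (by decide) (by decide) (by decide)
    · exact R 4 3 9 8 9 2 (by decide) (by decide) (by decide)
    · rw [sw 4 3, sw 4 9]; exact R 3 9 4 2 4 8 (by decide) (by decide) (by decide)
    · rw [sw 9 8]; exact R 4 8 3 9 9 7 (by decide) (by decide) (by decide)
    · rw [sw 3 9, sw 4 9, sw 4 8]; exact R 9 8 3 4 4 7 (by decide) (by decide) (by decide)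
  unfold IsPoorAt
  rw [Q 2 7 1 3 6 8 (inc_G10 _ _ (by decide)) (inc_G10 _ _ (by decide)), Set.ncard_coe_finset,
    sw 2 1, sw 2 3, h1, h2, sw 6 7, sw 8 7, Finset.union_self, Finset.card_eq_three]
  refine ⟨_, _, _, ?_, ?_, ?_, rfl⟩
  · rw [sw 2 7]; exact E 7 2 6 (by decide)
  · rw [sw 2 7]; exact E 7 2 8 (by decide)
  · exact E 7 6 8 (by decide)
end

section
/- Let G10 be the simple graph on vertices v0, v1, ..., v9 with edge set {v0v1, v0v5, v0v6, v1v2, v1v5, v2v3, v2v7, v3v4, v3v9, v4v8, v4v9, v5v6, v6v7, v7v8, v8v9} (a cubic graph on 10 vertices). Then for every nowhere-zero Z_2^3-flow θ on G10, the edge v2v7 is poor with respect to θ. -/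
open SimpleGraph

theorem G10_inc (v : Fin 10) (S : Finset (Sym2 (Fin 10)))
    (h : ∀ e : Sym2 (Fin 10), ((e ∈ ({s(0, 1), s(0, 5), s(0, 6), s(1, 2), s(1, 5), s(2, 3), s(2, 7),
      s(3, 4), s(3, 9), s(4, 8), s(4, 9), s(5, 6), s(6, 7), s(7, 8), s(8, 9)} :
        Finset (Sym2 (Fin 10))) ∧ ¬ e.IsDiag) ∧ v ∈ e) ↔ e ∈ S) :
    G10.incidenceSet v = (S : Set (Sym2 (Fin 10))) := by
  ext e
  rw [Finset.mem_coe, ← h e]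
  simp [G10, SimpleGraph.incidenceSet, SimpleGraph.edgeSet_fromEdgeSet]

theorem G10_sum (θ : Sym2 (Fin 10) → ZMod 2 × ZMod 2 × ZMod 2)
    (hθ : IsNowhereZeroFlow G10 θ) (v : Fin 10) (S : Finset (Sym2 (Fin 10)))
    (h : G10.incidenceSet v = (S : Set (Sym2 (Fin 10)))) : ∑ e ∈ S, θ e = 0 := by
  have := hθ.2 v
  rw [h, finsum_mem_coe_finset] at this
  exact this

theorem z_self (x : ZMod 2 × ZMod 2 × ZMod 2) : x + x = 0 := by
  revert x; decide

theorem z_cut (a b c d e x y : ZMod 2 × ZMod 2 × ZMod 2)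
    (h1 : a + (b + c) = 0) (h2 : a + (x + d) = 0) (h3 : b + (d + e) = 0)
    (h4 : c + (e + y) = 0) : x = y := by
  have key : x + y = (a + (b + c)) + (a + (x + d)) + (b + (d + e)) + (c + (e + y))
      - (a + a) - (b + b) - (c + c) - (d + d) - (e + e) := by abel
  rw [h1, h2, h3, h4] at key
  simp only [z_self] at key
  have h5 : x + y = y + y := by rw [key, z_self]; simp
  exact add_right_cancel h5

theorem stmt_19 (θ : Sym2 (Fin 10) → ZMod 2 × ZMod 2 × ZMod 2)
    (hθ : IsNowhereZeroFlow G10 θ) :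
    IsPoorAt G10 θ 2 7 := by
  have i0 := G10_inc 0 {s(0, 1), s(0, 5), s(0, 6)} (by decide)
  have h0 := G10_sum θ hθ _ _ i0
  rw [Finset.sum_insert (by decide), Finset.sum_insert (by decide), Finset.sum_singleton] at h0
  have i1 := G10_inc 1 {s(0, 1), s(1, 2), s(1, 5)} (by decide)
  have h1 := G10_sum θ hθ _ _ i1
  rw [Finset.sum_insert (by decide), Finset.sum_insert (by decide), Finset.sum_singleton] at h1
  have i5 := G10_inc 5 {s(0, 5), s(1, 5), s(5, 6)} (by decide)
  have h5 := G10_sum θ hθ _ _ i5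
  rw [Finset.sum_insert (by decide), Finset.sum_insert (by decide), Finset.sum_singleton] at h5
  have i6 := G10_inc 6 {s(0, 6), s(5, 6), s(6, 7)} (by decide)
  have h6 := G10_sum θ hθ _ _ i6
  rw [Finset.sum_insert (by decide), Finset.sum_insert (by decide), Finset.sum_singleton] at h6
  have i3 := G10_inc 3 {s(2, 3), s(3, 4), s(3, 9)} (by decide)
  have h3 := G10_sum θ hθ _ _ i3
  rw [Finset.sum_insert (by decide), Finset.sum_insert (by decide), Finset.sum_singleton] at h3
  have i4 := G10_inc 4 {s(3, 4), s(4, 8), s(4, 9)} (by decide)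
  have h4 := G10_sum θ hθ _ _ i4
  rw [Finset.sum_insert (by decide), Finset.sum_insert (by decide), Finset.sum_singleton] at h4
  have i8 := G10_inc 8 {s(4, 8), s(7, 8), s(8, 9)} (by decide)
  have h8 := G10_sum θ hθ _ _ i8
  rw [Finset.sum_insert (by decide), Finset.sum_insert (by decide), Finset.sum_singleton] at h8
  have i9 := G10_inc 9 {s(3, 9), s(4, 9), s(8, 9)} (by decide)
  have h9 := G10_sum θ hθ _ _ i9
  rw [Finset.sum_insert (by decide), Finset.sum_insert (by decide), Finset.sum_singleton] at h9
  have i2 := G10_inc 2 {s(1, 2), s(2, 3), s(2, 7)} (by decide)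
  have h2 := G10_sum θ hθ _ _ i2
  rw [Finset.sum_insert (by decide), Finset.sum_insert (by decide), Finset.sum_singleton] at h2
  have i7 := G10_inc 7 {s(2, 7), s(6, 7), s(7, 8)} (by decide)
  have e1 : θ s(1, 2) = θ s(6, 7) := z_cut _ _ _ _ _ _ _ h0 h1 h5 h6
  have e2 : θ s(2, 3) = θ s(7, 8) := by
    refine z_cut (θ s(3, 4)) (θ s(4, 9)) (θ s(4, 8)) (θ s(3, 9)) (θ s(8, 9)) _ _ ?_ ?_ ?_ ?_
    · rw [← h4]; abel
    · rw [← h3]; abel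
    · rw [← h9]; abel
    · rw [← h8]; abel
  have n (e) (he : e ∈ G10.edgeSet) := hθ.1 e he
  have n1 := n s(1, 2) (by simp [G10])
  have n2 := n s(2, 3) (by simp [G10])
  have n3 := n s(2, 7) (by simp [G10])
  have e3 : colorSet G10 θ 2 ∪ colorSet G10 θ 7 = {θ s(1, 2), θ s(2, 3), θ s(2, 7)} := by
    unfold colorSet
    rw [i2, i7]
    simp only [Finset.coe_insert, Finset.coe_singleton, Set.image_insert_eq, Set.image_singleton]
    rw [← e1, ← e2]
    ext x
    simp only [Set.mem_union, Set.mem_insert_iff, Set.mem_singleton_iff]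
    tauto
  unfold IsPoorAt
  rw [e3, Set.ncard_eq_three]
  have s := z_self
  refine ⟨_, _, _, ?_, ?_, ?_, rfl⟩ <;> intro h
  · rw [h, ← add_assoc, z_self, zero_add] at h2; exact n3 h2
  · rw [h, add_left_comm, z_self, add_zero] at h2; exact n2 h2
  · rw [h, z_self, add_zero] at h2; exact n1 h2
end
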